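/- arXiv:2508.10209 — 2 statements merged into one kernel-verified Lean document; each statement's English description precedes it below -/
import Mathlib

section
/- For every n ≥ 3, there exists a relatively cancellative element S ∈ P_{fin,0}(ℕ₀) with length set L(S) = {2, n}. -/
open Pointwise

/-- `X` is an atom (indecomposable element) of the monoid `P_{fin,0}(ℕ)` of finite
subsets of ℕ containing 0 under sumset addition. -/
def IsAtomP (X : Finset ℕ) : Prop :=
  0 ∈ X ∧ X ≠ {0} ∧
    ∀ A B : Finset ℕ, 0 ∈ A → 0 ∈ B → X = A + B → A = {0} ∨ B = {0}

/-- The length set of `X` in `P_{fin,0}(ℕ)`: the set of `n` such that `X` is a sum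
of `n` atoms. -/
def LengthSet (X : Finset ℕ) : Set ℕ :=
  {n | ∃ l : Multiset (Finset ℕ), Multiset.card l = n ∧ (∀ U ∈ l, IsAtomP U) ∧ l.sum = X}

/-- `X` is relatively cancellative in `P_{fin,0}(ℕ)`. -/
def RelCancel (X : Finset ℕ) : Prop :=
  ∀ B C D : Finset ℕ, 0 ∈ B → 0 ∈ C → 0 ∈ D → X = B + C → X = B + D → C = D

/-- `C` and `D` are relatively prime in `P_{fin,0}(ℕ)`: their only common divisor is `{0}`. -/
def RelPrime (C D : Finset ℕ) : Prop :=
  ∀ T : Finset ℕ, 0 ∈ T → (∃ C' : Finset ℕ, 0 ∈ C' ∧ C = T + C') →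
    (∃ D' : Finset ℕ, 0 ∈ D' ∧ D = T + D') → T = {0}

/-!
Two sets `A` and `B` whose heights (first coordinates) are stacked as `A₀, A₁, …` and `B₀, B₁, …`
add like polynomials: level `k` of `A + B` is `⋃_{i + j = k} A_i + B_j`. In `ℕ × (ι → ℕ)` consider
the set `S` with levels `[0, 1]`, `[0, 2]`, `[0, 1]`, where `1` and `2` are constant vectors. The
box `[0, 1]` decomposes only into boxes, so in `S = A + B` either one summand is a box at height
`0`, which forces the other one to have the same shape as `S`, or both have height `1`, and then
comparing the largest vectors of the middle level leaves only the levels `[0, 1]`, `{0}` for one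
summand and `{0}`, `[0, 1]` for the other. Both of these are atoms, whereas splitting off boxes
ends with `card ι` boxes of size two and one atom. Hence `S` has length set `{2, card ι + 1}`, and
a summand determines its cofactor.

Reading coordinates as digits in a large base transports all of this from `ℕ × (ι → ℕ)` to `ℕ`,
since only sums inside `S + S` matter.
-/

section Image

variable {M N : Type*} [AddCommMonoid M] [AddCommMonoid N] {φ : M →+ N} {S : Finset M}

lemma eq_of_image_eq [DecidableEq N] {T A B : Finset M} (hφ : Set.InjOn φ T) (hA : A ⊆ T)
    (hB : B ⊆ T) (h : A.image φ = B.image φ) : A = B :=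
  Finset.image_injOn_powerset_of_injOn hφ (by simpa using hA) (by simpa using hB) h

lemma eq_singleton_zero_of_image_eq [DecidableEq N] {T A : Finset M} (hT : 0 ∈ T)
    (hφ : Set.InjOn φ T) (hA : A ⊆ T) (h : A.image φ = {0}) : A = {0} :=
  eq_of_image_eq hφ hA (by simpa using hT) (by simpa using h)

lemma exists_zero_mem_image_eq [DecidableEq N] (hS : 0 ∈ S) (hφ : Set.InjOn φ S) {A' : Finset N}
    (h0 : 0 ∈ A') (hA' : A' ⊆ S.image φ) :
    ∃ A ⊆ S, 0 ∈ A ∧ A.image φ = A' := by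
  obtain ⟨A, hA, rfl⟩ := Finset.subset_image_iff.1 hA'
  obtain ⟨x, hx, hx0⟩ := Finset.mem_image.1 h0
  obtain rfl : x = 0 := hφ (hA hx) hS (by simpa using hx0)
  exact ⟨A, hA, hx, rfl⟩

lemma injOn_of_injOn_add_self [DecidableEq M] (hS : 0 ∈ S) (hφ : Set.InjOn φ (S + S : Finset M)) :
    Set.InjOn φ S :=
  hφ.mono (Finset.coe_subset.2 (Finset.subset_add_left S hS))

lemma injOn_add_self_mono [DecidableEq M] {U : Finset M} (hU : U ⊆ S)
    (hφ : Set.InjOn φ (S + S : Finset M)) : Set.InjOn φ (U + U : Finset M) :=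
  hφ.mono (Finset.coe_subset.2 (Finset.add_subset_add hU hU))

end Image

section Sumset

variable {M N : Type*} [AddCommMonoid M] [DecidableEq M]

/-- The atoms of the monoid of finite subsets of `M` containing `0`. For `M = ℕ` this is
`IsAtomP`. -/
def IsSumsetAtom (X : Finset M) : Prop :=
  0 ∈ X ∧ X ≠ {0} ∧
    ∀ A B : Finset M, 0 ∈ A → 0 ∈ B → X = A + B → A = {0} ∨ B = {0}

/-- The lengths of the factorizations of `X` into atoms of the monoid of finite subsets of `M`
containing `0`. For `M = ℕ` this is `LengthSet`. -/
def sumsetLengths (X : Finset M) : Set ℕ :=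
  {n | ∃ l : Multiset (Finset M), l.card = n ∧ (∀ U ∈ l, IsSumsetAtom U) ∧ l.sum = X}

/-- Relative cancellativity in the monoid of finite subsets of `M` containing `0`. For `M = ℕ` this
is `RelCancel`. -/
def IsSumsetRelCancel (X : Finset M) : Prop :=
  ∀ B C D : Finset M, 0 ∈ B → 0 ∈ C → 0 ∈ D → X = B + C → X = B + D → C = D

lemma zero_mem_multiset_sum {l : Multiset (Finset M)} (hl : ∀ U ∈ l, 0 ∈ U) : 0 ∈ l.sum :=
  Multiset.sum_induction (0 ∈ ·) l (fun _ _ hA hB => by simpa using Finset.add_mem_add hA hB)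
    Finset.zero_mem_zero hl

lemma subset_multiset_sum {l : Multiset (Finset M)} (hl : ∀ U ∈ l, 0 ∈ U) {U : Finset M}
    (hU : U ∈ l) : U ⊆ l.sum := by
  obtain ⟨t, rfl⟩ := Multiset.exists_cons_of_mem hU
  rw [Multiset.sum_cons]
  exact Finset.subset_add_left _ (zero_mem_multiset_sum fun V hV => hl V (by simp [hV]))

lemma eq_zero_of_sum_eq_singleton_zero {l : Multiset (Finset M)} (hl : ∀ U ∈ l, IsSumsetAtom U)
    (h : l.sum = {0}) : l = 0 := by
  refine Multiset.eq_zero_of_forall_notMem fun U hU => (hl U hU).2.1 ?_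
  have hsub : U ⊆ {0} := h ▸ subset_multiset_sum (fun V hV => (hl V hV).1) hU
  exact hsub.antisymm (by simpa using (hl U hU).1)

lemma IsSumsetAtom.card_eq_one {l : Multiset (Finset M)} (hl : ∀ U ∈ l, IsSumsetAtom U)
    (h : IsSumsetAtom l.sum) : l.card = 1 := by
  induction l using Multiset.induction with
  | empty => exact absurd rfl h.2.1
  | cons U l _ =>
    have hl' : ∀ V ∈ l, IsSumsetAtom V := fun V hV => hl V (by simp [hV])
    have hU : IsSumsetAtom U := hl U (by simp)
    have hzero := (h.2.2 U l.sum hU.1 (zero_mem_multiset_sum fun V hV => (hl' V hV).1)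
      (Multiset.sum_cons U l)).resolve_left hU.2.1
    simp [eq_zero_of_sum_eq_singleton_zero hl' hzero]

variable [AddCommMonoid N] [DecidableEq N] {φ : M →+ N} {S : Finset M}

lemma exists_add_eq_of_image_eq_add (hS : 0 ∈ S) (hφ : Set.InjOn φ (S + S : Finset M))
    {A' B' : Finset N} (hA' : 0 ∈ A') (hB' : 0 ∈ B') (h : S.image φ = A' + B') :
    ∃ A B : Finset M, 0 ∈ A ∧ 0 ∈ B ∧ S = A + B ∧ A.image φ = A' ∧ B.image φ = B' := by
  have hφS := injOn_of_injOn_add_self hS hφ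
  obtain ⟨A, hA, hA0, rfl⟩ :=
    exists_zero_mem_image_eq hS hφS hA' (h ▸ Finset.subset_add_left A' hB')
  obtain ⟨B, hB, hB0, rfl⟩ :=
    exists_zero_mem_image_eq hS hφS hB' (h ▸ Finset.subset_add_right B' hA')
  exact ⟨A, B, hA0, hB0, eq_of_image_eq hφ (Finset.subset_add_left S hS)
    (Finset.add_subset_add hA hB) (h.trans (Finset.image_add φ).symm), rfl, rfl⟩

lemma isSumsetAtom_image_iff (hS : 0 ∈ S) (hφ : Set.InjOn φ (S + S : Finset M)) :
    IsSumsetAtom (S.image φ) ↔ IsSumsetAtom S := by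
  have hφS := injOn_of_injOn_add_self hS hφ
  constructor
  · rintro ⟨-, hne, hatom⟩
    refine ⟨hS, fun h => hne (by simp [h]), fun A B hA hB hAB => ?_⟩
    refine (hatom (A.image φ) (B.image φ) (Finset.mem_image.2 ⟨0, hA, map_zero φ⟩)
      (Finset.mem_image.2 ⟨0, hB, map_zero φ⟩) (by rw [← Finset.image_add, hAB])).imp
      (eq_singleton_zero_of_image_eq hS hφS ?_) (eq_singleton_zero_of_image_eq hS hφS ?_)
    · exact hAB ▸ Finset.subset_add_left A hB
    · exact hAB ▸ Finset.subset_add_right B hA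
  · rintro ⟨-, hne, hatom⟩
    refine ⟨Finset.mem_image.2 ⟨0, hS, map_zero φ⟩,
      fun h => hne (eq_singleton_zero_of_image_eq hS hφS subset_rfl h), fun A' B' hA' hB' h => ?_⟩
    obtain ⟨A, B, hA, hB, hAB, rfl, rfl⟩ := exists_add_eq_of_image_eq_add hS hφ hA' hB' h
    exact (hatom A B hA hB hAB).imp (by rintro rfl; simp) (by rintro rfl; simp)

lemma exists_multiset_sum_eq_of_sum_eq_image {l : Multiset (Finset N)} (hl : ∀ U ∈ l, 0 ∈ U)
    (hS : 0 ∈ S) (hφ : Set.InjOn φ (S + S : Finset M)) (h : l.sum = S.image φ) :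
    ∃ l' : Multiset (Finset M), l'.map (Finset.image φ) = l ∧ l'.sum = S ∧ ∀ U ∈ l', 0 ∈ U := by
  induction l using Multiset.induction generalizing S with
  | empty =>
    have hS0 := eq_singleton_zero_of_image_eq hS (injOn_of_injOn_add_self hS hφ) subset_rfl h.symm
    exact ⟨0, rfl, hS0.symm, by simp⟩
  | cons U l ih =>
    have hl' : ∀ V ∈ l, 0 ∈ V := fun V hV => hl V (by simp [hV])
    obtain ⟨A, B, hA, hB, rfl, rfl, hB'⟩ := exists_add_eq_of_image_eq_add hS hφ (hl U (by simp))
      (zero_mem_multiset_sum hl') (h.symm.trans (Multiset.sum_cons U l))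
    obtain ⟨l', rfl, rfl, h0⟩ :=
      ih hl' hB (injOn_add_self_mono (Finset.subset_add_right B hA) hφ) hB'.symm
    exact ⟨A ::ₘ l', by simp, by simp, by simpa [hA] using h0⟩

lemma sumsetLengths_image (hS : 0 ∈ S) (hφ : Set.InjOn φ (S + S : Finset M)) :
    sumsetLengths (S.image φ) = sumsetLengths S := by
  have hiff : ∀ l : Multiset (Finset M), (∀ U ∈ l, 0 ∈ U) → l.sum = S → ∀ U ∈ l,
      (IsSumsetAtom (U.image φ) ↔ IsSumsetAtom U) := fun l hl h U hU =>
    isSumsetAtom_image_iff (hl U hU) (injOn_add_self_mono (h ▸ subset_multiset_sum hl hU) hφ)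
  ext n
  constructor
  · rintro ⟨l, rfl, hl, h⟩
    obtain ⟨l', rfl, h', hl'⟩ :=
      exists_multiset_sum_eq_of_sum_eq_image (fun U hU => (hl U hU).1) hS hφ h
    exact ⟨l', by simp, fun U hU =>
      (hiff l' hl' h' U hU).1 (hl _ (Multiset.mem_map_of_mem _ hU)), h'⟩
  · rintro ⟨l, rfl, hl, rfl⟩
    refine ⟨l.map (Finset.image φ), by simp, ?_,
      (map_multiset_sum (Finset.imageAddMonoidHom φ) l).symm⟩
    simp only [Multiset.mem_map]
    rintro _ ⟨U, hU, rfl⟩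
    exact (hiff l (fun U hU => (hl U hU).1) rfl U hU).2 (hl U hU)

lemma IsSumsetRelCancel.image (hS : 0 ∈ S) (hφ : Set.InjOn φ (S + S : Finset M))
    (h : IsSumsetRelCancel S) : IsSumsetRelCancel (S.image φ) := by
  intro B' C' D' hB' hC' hD' hBC' hBD'
  have hφS := injOn_of_injOn_add_self hS hφ
  obtain ⟨B, C, hB, hC, hBC, rfl, rfl⟩ := exists_add_eq_of_image_eq_add hS hφ hB' hC' hBC'
  obtain ⟨B₂, D, -, hD, hBD, hBB, rfl⟩ := exists_add_eq_of_image_eq_add hS hφ hB' hD' hBD'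
  obtain rfl : B₂ = B := eq_of_image_eq hφS (hBD ▸ Finset.subset_add_left B₂ hD)
    (hBC ▸ Finset.subset_add_left B hC) hBB
  rw [h B₂ C D hB hC hD hBC hBD]

end Sumset

section Stack

variable {V : Type*} [DecidableEq V]

/-- The subset of `ℕ × V` with the three levels `X`, `Y`, `Z` at heights `0`, `1`, `2`. Lower sets
are obtained by taking the top levels empty. -/
def stack (X Y Z : Finset V) : Finset (ℕ × V) := {0} ×ˢ X ∪ {1} ×ˢ Y ∪ {2} ×ˢ Z

lemma mem_stack {X Y Z : Finset V} {k : ℕ} {v : V} :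
    (k, v) ∈ stack X Y Z ↔ k = 0 ∧ v ∈ X ∨ k = 1 ∧ v ∈ Y ∨ k = 2 ∧ v ∈ Z := by
  simp only [stack, Finset.mem_union, Finset.mem_product, Finset.mem_singleton, or_assoc]

lemma stack_inj {X Y Z X' Y' Z' : Finset V} :
    stack X Y Z = stack X' Y' Z' ↔ X = X' ∧ Y = Y' ∧ Z = Z' := by
  refine ⟨fun h => ⟨?_, ?_, ?_⟩, by rintro ⟨rfl, rfl, rfl⟩; rfl⟩
  · ext v; simpa [mem_stack] using Finset.ext_iff.1 h (0, v)
  · ext v; simpa [mem_stack] using Finset.ext_iff.1 h (1, v)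
  · ext v; simpa [mem_stack] using Finset.ext_iff.1 h (2, v)

lemma exists_eq_stack_of_subset {X Y Z : Finset V} {A : Finset (ℕ × V)} (h : A ⊆ stack X Y Z) :
    ∃ A₀ A₁ A₂, A = stack A₀ A₁ A₂ := by
  refine ⟨{v ∈ X | (0, v) ∈ A}, {v ∈ Y | (1, v) ∈ A}, {v ∈ Z | (2, v) ∈ A}, ?_⟩
  ext ⟨k, v⟩
  have := @h (k, v)
  simp only [mem_stack, Finset.mem_filter] at this ⊢
  grind

variable [AddCommMonoid V]

lemma zero_mem_stack {X Y Z : Finset V} : 0 ∈ stack X Y Z ↔ 0 ∈ X := by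
  simp [← Prod.mk_zero_zero, mem_stack]

lemma stack_zero : stack (0 : Finset V) ∅ ∅ = {0} := by
  ext ⟨k, v⟩
  simp [mem_stack]

lemma stack_flat_add_stack (A B₀ B₁ B₂ : Finset V) :
    stack A ∅ ∅ + stack B₀ B₁ B₂ = stack (A + B₀) (A + B₁) (A + B₂) := by
  simp only [stack, Finset.add_union, Finset.product_add_product_comm,
    Finset.singleton_add_singleton, Finset.product_empty, Finset.union_empty, zero_add]

lemma stack_add_stack (A₀ A₁ B₀ B₁ : Finset V) :
    stack A₀ A₁ ∅ + stack B₀ B₁ ∅ = stack (A₀ + B₀) (A₀ + B₁ ∪ (A₁ + B₀)) (A₁ + B₁) := by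
  simp only [stack, Finset.add_union, Finset.union_add, Finset.product_add_product_comm,
    Finset.singleton_add_singleton, Finset.product_empty, Finset.union_empty, Finset.product_union,
    Finset.union_assoc, zero_add, add_zero, Nat.reduceAdd]
  exact congrArg _ (Finset.union_left_comm _ _ _)

lemma add_eq_stack_cases {X Y Z : Finset V} {A B : Finset (ℕ × V)} (hA : 0 ∈ A) (hB : 0 ∈ B)
    (h : A + B = stack X Y Z) :
    (∃ A₀ B₀ B₁ B₂, A = stack A₀ ∅ ∅ ∧ B = stack B₀ B₁ B₂ ∧
      A₀ + B₀ = X ∧ A₀ + B₁ = Y ∧ A₀ + B₂ = Z) ∨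
    (∃ B₀ A₀ A₁ A₂, B = stack B₀ ∅ ∅ ∧ A = stack A₀ A₁ A₂ ∧
      B₀ + A₀ = X ∧ B₀ + A₁ = Y ∧ B₀ + A₂ = Z) ∨
    ∃ A₀ A₁ B₀ B₁, A₁.Nonempty ∧ B₁.Nonempty ∧ A = stack A₀ A₁ ∅ ∧ B = stack B₀ B₁ ∅ ∧
      A₀ + B₀ = X ∧ A₀ + B₁ ∪ (A₁ + B₀) = Y ∧ A₁ + B₁ = Z := by
  obtain ⟨A₀, A₁, A₂, rfl⟩ := exists_eq_stack_of_subset (h ▸ Finset.subset_add_left A hB)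
  obtain ⟨B₀, B₁, B₂, rfl⟩ := exists_eq_stack_of_subset (h ▸ Finset.subset_add_right B hA)
  have hheight : ∀ i a j b, (i, a) ∈ stack A₀ A₁ A₂ → (j, b) ∈ stack B₀ B₁ B₂ → i + j ≤ 2 := by
    intro i a j b ha hb
    have := mem_stack.1 (h ▸ Finset.add_mem_add ha hb : (i + j, a + b) ∈ stack X Y Z)
    omega
  have hA₁B₂ : A₁ = ∅ ∨ B₂ = ∅ := by
    by_contra! ⟨⟨a, ha⟩, b, hb⟩
    simpa using hheight 1 a 2 b (by simp [mem_stack, ha]) (by simp [mem_stack, hb])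
  have hA₂B₁ : A₂ = ∅ ∨ B₁ = ∅ := by
    by_contra! ⟨⟨a, ha⟩, b, hb⟩
    simpa using hheight 2 a 1 b (by simp [mem_stack, ha]) (by simp [mem_stack, hb])
  have hA₂B₂ : A₂ = ∅ ∨ B₂ = ∅ := by
    by_contra! ⟨⟨a, ha⟩, b, hb⟩
    simpa using hheight 2 a 2 b (by simp [mem_stack, ha]) (by simp [mem_stack, hb])
  by_cases hAflat : A₁ = ∅ ∧ A₂ = ∅
  · obtain ⟨rfl, rfl⟩ := hAflat
    rw [stack_flat_add_stack, stack_inj] at h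
    exact .inl ⟨A₀, B₀, B₁, B₂, rfl, rfl, h⟩
  by_cases hBflat : B₁ = ∅ ∧ B₂ = ∅
  · obtain ⟨rfl, rfl⟩ := hBflat
    rw [add_comm, stack_flat_add_stack, stack_inj] at h
    exact .inr (.inl ⟨B₀, A₀, A₁, A₂, rfl, rfl, h⟩)
  obtain ⟨rfl, rfl, hA₁, hB₁⟩ : A₂ = ∅ ∧ B₂ = ∅ ∧ A₁ ≠ ∅ ∧ B₁ ≠ ∅ := by tauto
  rw [stack_add_stack, stack_inj] at h
  exact .inr (.inr ⟨A₀, A₁, B₀, B₁, Finset.nonempty_iff_ne_empty.2 hA₁,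
    Finset.nonempty_iff_ne_empty.2 hB₁, rfl, rfl, h⟩)

lemma eq_zero_of_card_add_eq_one [IsCancelAdd V] {A B : Finset V} (hA : 0 ∈ A)
    (h : (A + B).card = 1) : A = 0 := by
  have hne : (A + B).Nonempty := Finset.card_pos.1 (by omega)
  have hle : A.card ≤ 1 := h ▸ Finset.card_le_card_add_right hne.of_add_right
  exact Finset.eq_singleton_iff_unique_mem.2
    ⟨hA, fun a ha => Finset.card_le_one.1 hle a ha 0 hA⟩

lemma isSumsetAtom_stack [IsCancelAdd V] {X Y : Finset V} (hX : 0 ∈ X) (hY : Y.Nonempty)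
    (h : X.card = 1 ∨ Y.card = 1) : IsSumsetAtom (stack X Y ∅) := by
  refine ⟨zero_mem_stack.2 hX, ?_, fun A B hA hB hAB => ?_⟩
  · rw [← stack_zero, Ne, stack_inj]
    exact fun h => hY.ne_empty h.2.1
  have hflat : ∀ A₀ B₀ B₁ : Finset V, 0 ∈ A₀ → A₀ + B₀ = X → A₀ + B₁ = Y →
      stack A₀ ∅ ∅ = {0} := by
    rintro A₀ B₀ B₁ h0 rfl rfl
    rw [h.elim (eq_zero_of_card_add_eq_one h0) (eq_zero_of_card_add_eq_one h0), stack_zero]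
  obtain ⟨A₀, B₀, B₁, _, rfl, -, h₀, h₁, -⟩ | ⟨B₀, A₀, A₁, _, rfl, -, h₀, h₁, -⟩ |
    ⟨_, A₁, _, B₁, hA₁, hB₁, -, -, -, -, hempty⟩ := add_eq_stack_cases hA hB hAB.symm
  · exact .inl (hflat A₀ B₀ B₁ (zero_mem_stack.1 hA) h₀ h₁)
  · exact .inr (hflat B₀ A₀ A₁ (zero_mem_stack.1 hB) h₀ h₁)
  · exact absurd hempty (hA₁.add hB₁).ne_empty

end Stack

section Iic

variable {ι : Type*}

lemma eq_one_of_one_add_le_add {p q r s u : ι → ℕ} (hu : u ≤ 1) (hpq : p + q = u) (hrs : r + s = u)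
    (hps : 1 + u ≤ p + s) : u = 1 ∧ p = 1 ∧ q = 0 ∧ r = 0 ∧ s = 1 := by
  have hi (i : ι) : u i = 1 ∧ p i = 1 ∧ q i = 0 ∧ r i = 0 ∧ s i = 1 := by
    have hui : u i ≤ 1 := hu i
    have hpqi : p i + q i = u i := congrFun hpq i
    have hrsi : r i + s i = u i := congrFun hrs i
    have hpsi : 1 + u i ≤ p i + s i := hps i
    omega
  simpa [funext_iff, forall_and] using hi

open Finset

variable [Fintype ι] [DecidableEq ι]

lemma Iic_inj {a b : ι → ℕ} : Iic a = Iic b ↔ a = b := by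
  rw [← coe_inj, coe_Iic, coe_Iic, Set.Iic_inj]

lemma card_Iic_zero : (Iic (0 : ι → ℕ)).card = 1 :=
  card_eq_one.2 ⟨0, Iic_bot⟩

lemma Iic_add_Iic (a b : ι → ℕ) : Iic a + Iic b = Iic (a + b) := by
  refine (Iic_add_Iic_subset a b).antisymm fun v hv => mem_add.2
    ⟨v ⊓ a, by simp, v - v ⊓ a, ?_, add_tsub_cancel_of_le inf_le_left⟩
  rw [mem_Iic] at hv ⊢
  intro i
  have := hv i
  simp only [Pi.add_apply, Pi.sub_apply, Pi.inf_apply] at this ⊢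
  omega

lemma eq_Iic_of_Iic_add_eq {a b : ι → ℕ} {B : Finset (ι → ℕ)} (hab : ∀ i, a i = 0 ∨ b i ≤ 1)
    (h : Iic a + B = Iic (a + b)) : B = Iic b := by
  have hle : ∀ v ∈ B, v ≤ b := fun v hv =>
    le_of_add_le_add_left (mem_Iic.1 (h ▸ add_mem_add (mem_Iic.2 le_rfl) hv))
  refine Subset.antisymm (fun v hv => mem_Iic.2 (hle v hv)) fun v hv => ?_
  -- `v` is the only vector of `[0, b]` from which the corner `w` can be reached by adding `[0, a]`.
  set w : ι → ℕ := fun i => if v i = 0 then 0 else a i + v i with hw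
  have hw_mem : w ∈ Iic a + B := by
    rw [h, mem_Iic]
    intro i
    have := mem_Iic.1 hv i
    simp only [hw, Pi.add_apply]
    grind
  obtain ⟨x, hx, y, hy, hxy⟩ := mem_add.1 hw_mem
  suffices y = v from this ▸ hy
  ext i
  have hxi : x i ≤ a i := mem_Iic.1 hx i
  have hyi : y i ≤ b i := hle y hy i
  have hwi : x i + y i = if v i = 0 then 0 else a i + v i := congrFun hxy i
  grind

lemma exists_eq_Iic_of_add_eq_Iic {A B : Finset (ι → ℕ)} {u : ι → ℕ} (hu : u ≤ 1)
    (h : A + B = Iic u) : ∃ a b, A = Iic a ∧ B = Iic b ∧ a + b = u := by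
  obtain ⟨a, ha, b, hb, rfl⟩ := mem_add.1 (h ▸ mem_Iic.2 le_rfl : u ∈ A + B)
  have hA : A ⊆ Iic a := fun v hv => mem_Iic.2 <|
    le_of_add_le_add_right (mem_Iic.1 (h ▸ add_mem_add hv hb))
  have hB : B ⊆ Iic b := fun v hv => mem_Iic.2 <|
    le_of_add_le_add_left (mem_Iic.1 (h ▸ add_mem_add ha hv))
  have hab : ∀ i, a i + b i ≤ 1 := hu
  refine ⟨a, b, eq_Iic_of_Iic_add_eq (a := b) (fun i => ?_) ?_,
    eq_Iic_of_Iic_add_eq (a := a) (fun i => ?_) ?_, rfl⟩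
  · have := hab i; omega
  · refine Subset.antisymm ?_ ?_
    · exact (add_subset_add_left hA).trans (Iic_add_Iic b a).subset
    · rw [add_comm b a, ← h, add_comm A B]
      exact add_subset_add_right hB
  · have := hab i; omega
  · refine Subset.antisymm ?_ ?_
    · exact (add_subset_add_left hB).trans (Iic_add_Iic a b).subset
    · rw [← h]
      exact add_subset_add_right hA

end Iic

section Tower

variable {ι : Type*} [Fintype ι] [DecidableEq ι]

open Finset

/-- The order interval `[0, a]` of `ι → ℕ`, placed at height `0`. -/
def flatBox (a : ι → ℕ) : Finset (ℕ × (ι → ℕ)) := stack (Iic a) ∅ ∅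

/-- The set with levels `[0, u]`, `[0, 1 + u]`, `[0, u]`. For `u = 1` its length set is
`{2, card ι + 1}`. -/
def tower (u : ι → ℕ) : Finset (ℕ × (ι → ℕ)) := stack (Iic u) (Iic (1 + u)) (Iic u)

/-- The set with levels `[0, 1]`, `{0}`, one of the two factors in the short factorization of
`tower 1`. -/
def boxUnderPoint : Finset (ℕ × (ι → ℕ)) := stack (Iic 1) (Iic 0) ∅

/-- The set with levels `{0}`, `[0, 1]`, the cofactor of `boxUnderPoint` in `tower 1`. -/
def pointUnderBox : Finset (ℕ × (ι → ℕ)) := stack (Iic 0) (Iic 1) ∅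

variable {a b u : ι → ℕ} {A B : Finset (ℕ × (ι → ℕ))}

lemma zero_mem_flatBox (a : ι → ℕ) : 0 ∈ flatBox a := zero_mem_stack.2 (by simp)

lemma zero_mem_tower (u : ι → ℕ) : 0 ∈ tower u := zero_mem_stack.2 (by simp)

lemma flatBox_inj : flatBox a = flatBox b ↔ a = b := by
  simp [flatBox, stack_inj, Iic_inj]

lemma tower_inj : tower a = tower b ↔ a = b := by
  simp [tower, stack_inj, Iic_inj]

lemma flatBox_ne_tower : flatBox a ≠ tower b := by
  rw [flatBox, tower, Ne, stack_inj]
  exact fun h => nonempty_Iic.ne_empty h.2.2.symm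

lemma flatBox_ne_boxUnderPoint : flatBox a ≠ boxUnderPoint := by
  rw [flatBox, boxUnderPoint, Ne, stack_inj]
  exact fun h => nonempty_Iic.ne_empty h.2.1.symm

lemma flatBox_ne_pointUnderBox : flatBox a ≠ pointUnderBox := by
  rw [flatBox, pointUnderBox, Ne, stack_inj]
  exact fun h => nonempty_Iic.ne_empty h.2.1.symm

lemma tower_ne_boxUnderPoint : tower a ≠ boxUnderPoint := by
  rw [tower, boxUnderPoint, Ne, stack_inj]
  exact fun h => nonempty_Iic.ne_empty h.2.2

lemma tower_ne_pointUnderBox : tower a ≠ pointUnderBox := by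
  rw [tower, pointUnderBox, Ne, stack_inj]
  exact fun h => nonempty_Iic.ne_empty h.2.2

lemma flatBox_zero : flatBox (0 : ι → ℕ) = {0} := by
  rw [← stack_zero, flatBox, stack_inj]
  exact ⟨Iic_bot, rfl, rfl⟩

lemma flatBox_eq_singleton_zero_iff : flatBox a = {0} ↔ a = 0 := by
  rw [← flatBox_zero, flatBox_inj]

lemma tower_ne_singleton_zero : tower u ≠ {0} :=
  flatBox_zero (ι := ι) ▸ flatBox_ne_tower.symm

lemma flatBox_add_flatBox (a b : ι → ℕ) : flatBox a + flatBox b = flatBox (a + b) := by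
  simp [flatBox, stack_flat_add_stack, Iic_add_Iic]

lemma flatBox_add_tower (a b : ι → ℕ) : flatBox a + tower b = tower (a + b) := by
  simp [flatBox, tower, stack_flat_add_stack, Iic_add_Iic, add_left_comm]

lemma boxUnderPoint_add_pointUnderBox :
    boxUnderPoint + pointUnderBox = tower (1 : ι → ℕ) := by
  simp only [boxUnderPoint, pointUnderBox, tower, stack_add_stack, Iic_add_Iic, add_zero, zero_add]
  rw [union_eq_left.2 (Iic_subset_Iic.2 (by simp))]

lemma exists_eq_flatBox_of_add_eq_flatBox (hu : u ≤ 1) (hA : 0 ∈ A) (hB : 0 ∈ B)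
    (h : A + B = flatBox u) : ∃ a b, a + b = u ∧ A = flatBox a ∧ B = flatBox b := by
  obtain ⟨A₀, B₀, B₁, B₂, rfl, rfl, h₀, h₁, h₂⟩ | ⟨B₀, A₀, A₁, A₂, rfl, rfl, h₀, h₁, h₂⟩ |
    ⟨_, A₁, _, B₁, hA₁, hB₁, -, -, -, -, hempty⟩ := add_eq_stack_cases hA hB h
  · obtain ⟨a, b, rfl, rfl, hab⟩ := exists_eq_Iic_of_add_eq_Iic hu h₀
    obtain ⟨rfl, rfl⟩ : B₁ = ∅ ∧ B₂ = ∅ := by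
      simpa [nonempty_Iic.ne_empty] using And.intro h₁ h₂
    exact ⟨a, b, hab, rfl, rfl⟩
  · obtain ⟨b, a, rfl, rfl, hab⟩ := exists_eq_Iic_of_add_eq_Iic hu h₀
    obtain ⟨rfl, rfl⟩ : A₁ = ∅ ∧ A₂ = ∅ := by
      simpa [nonempty_Iic.ne_empty] using And.intro h₁ h₂
    exact ⟨a, b, (add_comm a b).trans hab, rfl, rfl⟩
  · exact absurd hempty (hA₁.add hB₁).ne_empty

lemma exists_eq_flatBox_eq_tower (hu : u ≤ 1) {A₀ B₀ B₁ B₂ : Finset (ι → ℕ)} (h₀ : A₀ + B₀ = Iic u)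
    (h₁ : A₀ + B₁ = Iic (1 + u)) (h₂ : A₀ + B₂ = Iic u) :
    ∃ a b, a + b = u ∧ stack A₀ ∅ ∅ = flatBox a ∧ stack B₀ B₁ B₂ = tower b := by
  obtain ⟨a, b, rfl, rfl, rfl⟩ := exists_eq_Iic_of_add_eq_Iic hu h₀
  have hab : ∀ i, a i + b i ≤ 1 := hu
  refine ⟨a, b, rfl, rfl, ?_⟩
  rw [eq_Iic_of_Iic_add_eq (B := B₁) (b := 1 + b) (fun i => ?_) (by rwa [add_left_comm]),
    eq_Iic_of_Iic_add_eq (fun i => ?_) h₂, tower]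
  · have := hab i; omega
  · have := hab i; simp only [Pi.add_apply, Pi.one_apply]; omega

lemma add_eq_tower_cases (hu : u ≤ 1) (hA : 0 ∈ A) (hB : 0 ∈ B) (h : A + B = tower u) :
    (∃ a b, a + b = u ∧ A = flatBox a ∧ B = tower b) ∨
    (∃ a b, a + b = u ∧ A = tower a ∧ B = flatBox b) ∨
    u = 1 ∧ (A = boxUnderPoint ∧ B = pointUnderBox ∨ A = pointUnderBox ∧ B = boxUnderPoint) := by
  obtain ⟨A₀, B₀, B₁, B₂, rfl, rfl, h₀, h₁, h₂⟩ | ⟨B₀, A₀, A₁, A₂, rfl, rfl, h₀, h₁, h₂⟩ |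
    ⟨A₀, A₁, B₀, B₁, -, -, rfl, rfl, h₀, h₁, h₂⟩ := add_eq_stack_cases hA hB h
  · exact .inl (exists_eq_flatBox_eq_tower hu h₀ h₁ h₂)
  · obtain ⟨b, a, rfl, hB, hA⟩ := exists_eq_flatBox_eq_tower hu h₀ h₁ h₂
    exact .inr (.inl ⟨a, b, add_comm a b, hA, hB⟩)
  obtain ⟨p, q, rfl, rfl, hpq⟩ := exists_eq_Iic_of_add_eq_Iic hu h₀
  obtain ⟨r, s, rfl, rfl, hrs⟩ := exists_eq_Iic_of_add_eq_Iic hu h₂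
  rw [Iic_add_Iic, Iic_add_Iic] at h₁
  have hmem : 1 + u ∈ Iic (p + s) ∪ Iic (r + q) := h₁ ▸ mem_Iic.2 le_rfl
  rw [mem_union, mem_Iic, mem_Iic] at hmem
  refine .inr (.inr ?_)
  obtain hps | hrq := hmem
  · obtain ⟨hu1, rfl, rfl, rfl, rfl⟩ := eq_one_of_one_add_le_add hu hpq hrs hps
    exact ⟨hu1, .inl ⟨rfl, rfl⟩⟩
  · obtain ⟨hu1, rfl, rfl, rfl, rfl⟩ := eq_one_of_one_add_le_add hu hrs hpq hrq
    exact ⟨hu1, .inr ⟨rfl, rfl⟩⟩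

lemma isSumsetRelCancel_tower_one : IsSumsetRelCancel (tower (1 : ι → ℕ)) := by
  intro B C D hB hC hD hBC hBD
  have hC' := add_eq_tower_cases le_rfl hB hC hBC.symm
  have hD' := add_eq_tower_cases le_rfl hB hD hBD.symm
  grind [add_left_cancel, flatBox_inj, tower_inj, flatBox_ne_tower, flatBox_ne_boxUnderPoint,
    flatBox_ne_pointUnderBox, tower_ne_boxUnderPoint, tower_ne_pointUnderBox]

lemma isSumsetAtom_flatBox_iff : IsSumsetAtom (flatBox u) ↔ ∑ i, u i = 1 := by
  constructor
  · rintro ⟨-, hne, hatom⟩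
    obtain ⟨i, hi⟩ := Function.ne_iff.1 (mt flatBox_eq_singleton_zero_iff.2 hne)
    have hle : Pi.single i 1 ≤ u :=
      update_le_iff.2 ⟨Nat.one_le_iff_ne_zero.2 hi, fun _ _ => Nat.zero_le _⟩
    have hsum : flatBox u = flatBox (Pi.single i 1) + flatBox (u - Pi.single i 1) := by
      rw [flatBox_add_flatBox, add_tsub_cancel_of_le hle]
    have hsub := (hatom _ _ (zero_mem_flatBox _) (zero_mem_flatBox _) hsum).resolve_left
      (by simp [flatBox_eq_singleton_zero_iff])
    rw [flatBox_eq_singleton_zero_iff, tsub_eq_zero_iff_le] at hsub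
    simp [hsub.antisymm hle]
  · intro hsum
    have hu : u ≤ 1 := fun i =>
      (single_le_sum (fun _ _ => Nat.zero_le _) (mem_univ i)).trans hsum.le
    refine ⟨zero_mem_flatBox u, fun h => ?_, fun A B hA hB h => ?_⟩
    · simp [flatBox_eq_singleton_zero_iff.1 h] at hsum
    obtain ⟨a, b, rfl, rfl, rfl⟩ := exists_eq_flatBox_of_add_eq_flatBox hu hA hB h.symm
    have hab : ∑ i, a i = 0 ∨ ∑ i, b i = 0 := by
      simp only [Pi.add_apply, sum_add_distrib] at hsum
      omega
    simpa [flatBox_eq_singleton_zero_iff, funext_iff] using hab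

lemma eq_zero_of_isSumsetAtom_tower (h : IsSumsetAtom (tower u)) : u = 0 := by
  have hsum : tower u = flatBox u + tower 0 := by
    rw [flatBox_add_tower, add_zero]
  have hbox := (h.2.2 _ _ (zero_mem_flatBox u) (zero_mem_tower 0) hsum).resolve_right
    tower_ne_singleton_zero
  exact flatBox_eq_singleton_zero_iff.1 hbox

lemma isSumsetAtom_tower_zero [Nonempty ι] : IsSumsetAtom (tower (0 : ι → ℕ)) := by
  refine ⟨zero_mem_tower 0, tower_ne_singleton_zero, fun A B hA hB h => ?_⟩
  obtain ⟨a, b, hab, rfl, rfl⟩ | ⟨a, b, hab, rfl, rfl⟩ | ⟨h01, -⟩ :=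
    add_eq_tower_cases zero_le_one hA hB h.symm
  · exact .inl (flatBox_eq_singleton_zero_iff.2 (add_eq_zero.1 hab).1)
  · exact .inr (flatBox_eq_singleton_zero_iff.2 (add_eq_zero.1 hab).2)
  · exact absurd h01 zero_ne_one

lemma isSumsetAtom_boxUnderPoint : IsSumsetAtom (boxUnderPoint (ι := ι)) :=
  isSumsetAtom_stack (by simp) nonempty_Iic (.inr card_Iic_zero)

lemma isSumsetAtom_pointUnderBox : IsSumsetAtom (pointUnderBox (ι := ι)) :=
  isSumsetAtom_stack (by simp) nonempty_Iic (.inl card_Iic_zero)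

variable {l : Multiset (Finset (ℕ × (ι → ℕ)))}

lemma card_eq_sum_of_sum_eq_flatBox (hu : u ≤ 1) (hl : ∀ U ∈ l, IsSumsetAtom U)
    (h : l.sum = flatBox u) : l.card = ∑ i, u i := by
  induction l using Multiset.induction generalizing u with
  | empty =>
    simp [flatBox_eq_singleton_zero_iff.1 h.symm]
  | cons U l ih =>
    rw [Multiset.forall_mem_cons] at hl
    rw [Multiset.sum_cons] at h
    obtain ⟨a, b, rfl, rfl, hb⟩ := exists_eq_flatBox_of_add_eq_flatBox hu hl.1.1
      (zero_mem_multiset_sum fun V hV => (hl.2 V hV).1) h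
    have hb_le : b ≤ 1 := le_add_self.trans hu
    simp [ih hb_le hl.2 hb, sum_add_distrib, isSumsetAtom_flatBox_iff.1 hl.1, add_comm]

lemma card_of_sum_eq_tower (hu : u ≤ 1) (hl : ∀ U ∈ l, IsSumsetAtom U) (h : l.sum = tower u) :
    l.card = ∑ i, u i + 1 ∨ u = 1 ∧ l.card = 2 := by
  induction l using Multiset.induction generalizing u with
  | empty =>
    exact absurd h.symm tower_ne_singleton_zero
  | cons U l ih =>
    rw [Multiset.forall_mem_cons] at hl
    rw [Multiset.sum_cons] at h
    rw [Multiset.card_cons]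
    obtain ⟨a, b, rfl, rfl, hb⟩ | ⟨a, b, rfl, rfl, hb⟩ | ⟨rfl, hUl⟩ :=
      add_eq_tower_cases hu hl.1.1 (zero_mem_multiset_sum fun V hV => (hl.2 V hV).1) h
    · have ha : ∑ i, a i = 1 := isSumsetAtom_flatBox_iff.1 hl.1
      obtain hcard | ⟨rfl, -⟩ := ih (le_add_self.trans hu) hl.2 hb
      · simp [hcard, sum_add_distrib, ha, add_comm]
      · obtain rfl : a = 0 := by simpa using hu
        simp at ha
    · obtain rfl := eq_zero_of_isSumsetAtom_tower hl.1
      exact .inl (by simp [card_eq_sum_of_sum_eq_flatBox (le_add_self.trans hu) hl.2 hb])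
    · have hatom : IsSumsetAtom l.sum := by
        obtain ⟨-, hl⟩ | ⟨-, hl⟩ := hUl
        · exact hl ▸ isSumsetAtom_pointUnderBox
        · exact hl ▸ isSumsetAtom_boxUnderPoint
      exact .inr ⟨rfl, by rw [hatom.card_eq_one hl.2]⟩

lemma sum_flatBox {κ : Type*} (s : Finset κ) (f : κ → ι → ℕ) :
    ∑ k ∈ s, flatBox (f k) = flatBox (∑ k ∈ s, f k) :=
  (map_sum (⟨⟨flatBox, flatBox_zero⟩, fun a b => (flatBox_add_flatBox a b).symm⟩ :
    (ι → ℕ) →+ Finset (ℕ × (ι → ℕ))) f s).symm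

theorem sumsetLengths_tower_one [Nonempty ι] :
    sumsetLengths (tower (1 : ι → ℕ)) = {2, Fintype.card ι + 1} := by
  ext n
  simp only [Set.mem_insert_iff, Set.mem_singleton_iff]
  constructor
  · rintro ⟨l, rfl, hl, h⟩
    obtain hcard | ⟨-, hcard⟩ := card_of_sum_eq_tower le_rfl hl h
    · exact .inr (by simpa using hcard)
    · exact .inl hcard
  rintro (rfl | rfl)
  · exact ⟨{boxUnderPoint, pointUnderBox}, rfl,
      by simp [isSumsetAtom_boxUnderPoint, isSumsetAtom_pointUnderBox],
      by simpa using boxUnderPoint_add_pointUnderBox⟩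
  · refine ⟨tower 0 ::ₘ univ.val.map fun i => flatBox (Pi.single i 1), by simp, ?_, ?_⟩
    · simp [isSumsetAtom_tower_zero, isSumsetAtom_flatBox_iff]
    · have hsum : ∑ i : ι, (Pi.single i 1 : ι → ℕ) = 1 := univ_sum_single 1
      rw [Multiset.sum_cons, ← Finset.sum_eq_multiset_sum, sum_flatBox, hsum, add_comm,
        flatBox_add_tower, add_zero]

end Tower

section Digits

/-- The number with lowest digit `k` and further digits `v 0, …, v (m - 1)` in base `b`; digits
`≥ b` are allowed, which makes this additive. -/
def digitHom (b m : ℕ) : ℕ × (Fin m → ℕ) →+ ℕ where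
  toFun x := x.1 + b * ∑ i, x.2 i * b ^ (i : ℕ)
  map_zero' := by simp
  map_add' x y := by
    simp only [Prod.fst_add, Prod.snd_add, Pi.add_apply, add_mul, Finset.sum_add_distrib]
    ring

lemma injOn_digitHom (b m : ℕ) :
    Set.InjOn (digitHom b m) {x | x.1 < b ∧ ∀ i, x.2 i < b} := by
  rintro ⟨k, v⟩ ⟨hk, hv⟩ ⟨k', v'⟩ ⟨hk', hv'⟩ h
  change k + b * ∑ i, v i * b ^ (i : ℕ) = k' + b * ∑ i, v' i * b ^ (i : ℕ) at h
  obtain rfl : k = k' := by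
    simpa [Nat.mod_eq_of_lt hk, Nat.mod_eq_of_lt hk'] using congrArg (· % b) h
  have hsum := Nat.eq_of_mul_eq_mul_left (Nat.zero_lt_of_lt hk) (Nat.add_left_cancel h)
  have hdigits : (fun i => (⟨v i, hv i⟩ : Fin b)) = fun i => ⟨v' i, hv' i⟩ := by
    apply finFunctionFinEquiv.injective
    ext
    simpa [finFunctionFinEquiv_apply] using hsum
  congr 1
  ext i
  simpa using congrFun hdigits i

lemma exists_addMonoidHom_injOn {m : ℕ} (S : Finset (ℕ × (Fin m → ℕ))) :
    ∃ φ : ℕ × (Fin m → ℕ) →+ ℕ, Set.InjOn φ S := by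
  let size : ℕ × (Fin m → ℕ) → ℕ := fun x => x.1 + ∑ i, x.2 i
  refine ⟨digitHom (S.sup size + 1) m, (injOn_digitHom _ m).mono fun x hx => ?_⟩
  have hsize : size x ≤ S.sup size := Finset.le_sup (Finset.mem_coe.1 hx)
  refine ⟨by grind, fun i => ?_⟩
  have : x.2 i ≤ ∑ i, x.2 i := Finset.single_le_sum (fun _ _ => Nat.zero_le _) (Finset.mem_univ i)
  grind

end Digits

theorem exists_relCancel_lengthSet_two_n (n : ℕ) (hn : 3 ≤ n) :
    ∃ S : Finset ℕ, 0 ∈ S ∧ RelCancel S ∧ LengthSet S = {2, n} := by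
  obtain ⟨m, rfl⟩ : ∃ m, n = m + 1 := ⟨n - 1, by omega⟩
  have : Nonempty (Fin m) := ⟨⟨0, by omega⟩⟩
  have h0 := zero_mem_tower (1 : Fin m → ℕ)
  obtain ⟨φ, hφ⟩ := exists_addMonoidHom_injOn (tower (1 : Fin m → ℕ) + tower 1)
  refine ⟨(tower 1).image φ, Finset.mem_image.2 ⟨0, h0, map_zero φ⟩,
    isSumsetRelCancel_tower_one.image h0 hφ, (sumsetLengths_image h0 hφ).trans ?_⟩
  rw [sumsetLengths_tower_one, Fintype.card_fin]
end

section
/- For every k ≥ 2, the interval [k, k+2] = {k, k+1, k+2} occurs as the length set of some element of P_{fin,0}(ℕ₀). -/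
open Pointwise

/-!
Put `A₀` at the bottom and a far translate of `A₁` on top of it. A decomposition of this layered
set splits off a common divisor of `A₀` and `A₁` and leaves the two cofactors, layered in the same
way; the latter is an atom exactly when the cofactors are relatively prime. So the lengths of the
layered set are one more than the lengths of the common divisors with relatively prime cofactors.
Layering a relatively cancellative set on itself gives a relatively cancellative set whose length
set is shifted by one, so an interval settles `k = 2` and a relatively cancellative set with length
set `{3, 4, 5}` settles the rest.

For relatively cancellative `P`, `Q` and large `N`, the sumset `P + N * Q` factors like the pair
`(P, Q)`, so lengths add. The hexagon `H` and the pentagon `Q` below have exactly two common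
divisors with relatively prime cofactors, a triangle and a parallelogram, of lengths `1` and `2`.
For `H + N * H` and `Q + N * Q` the lengths are then `{1, 2} + {1, 2} = {2, 3, 4}`, and layering
these two sets gives `{3, 4, 5}`.
-/

section Sumsets

theorem zero_mem_add_iff {M : Type*} [AddCommMonoid M] [Subsingleton (AddUnits M)]
    [DecidableEq M] {B C : Finset M} : 0 ∈ B + C ↔ 0 ∈ B ∧ 0 ∈ C := by
  simp only [Finset.mem_add, add_eq_zero]
  exact ⟨fun ⟨_, hb, _, hc, hb0, hc0⟩ => ⟨hb0 ▸ hb, hc0 ▸ hc⟩,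
    fun ⟨hB, hC⟩ => ⟨0, hB, 0, hC, rfl, rfl⟩⟩

theorem singleton_zero_add_finset {M : Type*} [AddZeroClass M] [DecidableEq M] (B : Finset M) :
    {0} + B = B := by
  rw [Finset.singleton_zero, zero_add]

theorem add_singleton_zero_finset {M : Type*} [AddZeroClass M] [DecidableEq M] (B : Finset M) :
    B + {0} = B := by
  rw [Finset.singleton_zero, add_zero]

theorem eq_singleton_zero_of_add_eq {M : Type*} [AddCommMonoid M] [Subsingleton (AddUnits M)]
    [DecidableEq M] {B C : Finset M} (h : B + C = {0}) : B = {0} := by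
  obtain ⟨hB, hC⟩ := zero_mem_add_iff.1 (h ▸ Finset.mem_singleton_self 0)
  exact Finset.eq_singleton_iff_unique_mem.2
    ⟨hB, fun b hb => Finset.mem_singleton.1 (h ▸ Finset.subset_add_left B hC hb)⟩

theorem exists_forall_two_mul_lt (X : Finset ℕ) : ∃ N, ∀ x ∈ X, 2 * x < N :=
  ⟨2 * X.sup id + 1, fun x hx => by have := X.le_sup (f := id) hx; dsimp at this; omega⟩

theorem exists_image_eq_of_add_eq_image {M M' : Type*} [AddZeroClass M] [AddZeroClass M']
    [DecidableEq M] [DecidableEq M'] (f : M →+ M') {F : Finset M} (hF : 0 ∈ F)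
    (hf : Set.InjOn f ↑(F + F)) {S T : Finset M'} (hS : 0 ∈ S) (hT : 0 ∈ T)
    (h : S + T = F.image f) :
    ∃ S' T' : Finset M, S = S'.image f ∧ T = T'.image f ∧ S' + T' = F := by
  have image_filter : ∀ {Z : Finset M'}, Z ⊆ F.image f → Z = (F.filter (f · ∈ Z)).image f := by
    intro Z hZ
    rw [← Finset.filter_image (p := (· ∈ Z)), Finset.filter_mem_eq_inter,
      Finset.inter_eq_right.2 hZ]
  have hFF : F ⊆ F + F := Finset.subset_add_left F hF
  have hS' := image_filter (h ▸ Finset.subset_add_left S hT)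
  have hT' := image_filter (h ▸ Finset.subset_add_right T hS)
  refine ⟨_, _, hS', hT', ?_⟩
  have hsub : F.filter (f · ∈ S) + F.filter (f · ∈ T) ⊆ F + F :=
    Finset.add_subset_add (Finset.filter_subset _ _) (Finset.filter_subset _ _)
  refine (Finset.image_eq_image_iff_of_injOn hf hsub hFF).1 ?_
  rw [Finset.image_add, ← hS', ← hT', h]

end Sumsets

section LengthSet

variable {A B U : Finset ℕ} {m n : ℕ}

theorem zero_mem_lengthSet_iff : 0 ∈ LengthSet A ↔ A = {0} := by
  constructor
  · rintro ⟨l, hl, -, rfl⟩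
    rw [Multiset.card_eq_zero.1 hl, Multiset.sum_zero, Finset.singleton_zero]
  · rintro rfl
    exact ⟨0, rfl, by simp, rfl⟩

theorem succ_mem_lengthSet_iff :
    n + 1 ∈ LengthSet A ↔ ∃ U B, IsAtomP U ∧ n ∈ LengthSet B ∧ U + B = A := by
  constructor
  · rintro ⟨l, hn, hl, rfl⟩
    obtain ⟨U, hU⟩ := Multiset.card_pos_iff_exists_mem.1 (show 0 < Multiset.card l by omega)
    obtain ⟨r, rfl⟩ := Multiset.exists_cons_of_mem hU
    rw [Multiset.card_cons, Nat.add_right_cancel_iff] at hn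
    exact ⟨U, r.sum, hl U (r.mem_cons_self U),
      ⟨r, hn, fun V hV => hl V (Multiset.mem_cons_of_mem hV), rfl⟩, (Multiset.sum_cons U r).symm⟩
  · rintro ⟨U, -, hU, ⟨r, rfl, hr, rfl⟩, rfl⟩
    exact ⟨U ::ₘ r, Multiset.card_cons U r, Multiset.forall_mem_cons.2 ⟨hU, hr⟩,
      Multiset.sum_cons U r⟩

theorem add_mem_lengthSet_add (hm : m ∈ LengthSet A) (hn : n ∈ LengthSet B) :
    m + n ∈ LengthSet (A + B) := by
  obtain ⟨l, rfl, hl, rfl⟩ := hm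
  obtain ⟨r, rfl, hr, rfl⟩ := hn
  exact ⟨l + r, Multiset.card_add l r,
    fun V hV => (Multiset.mem_add.1 hV).elim (hl V) (hr V), Multiset.sum_add l r⟩

theorem zero_mem_of_mem_lengthSet (hn : n ∈ LengthSet A) : 0 ∈ A := by
  induction n generalizing A with
  | zero => exact zero_mem_lengthSet_iff.1 hn ▸ Finset.mem_singleton_self 0
  | succ n ih =>
    obtain ⟨U, B, hU, hB, rfl⟩ := succ_mem_lengthSet_iff.1 hn
    exact zero_mem_add_iff.2 ⟨hU.1, ih hB⟩

theorem exists_le_of_mem_lengthSet (hn : n ∈ LengthSet A) : ∃ x ∈ A, n ≤ x := by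
  induction n generalizing A with
  | zero => exact ⟨0, zero_mem_of_mem_lengthSet hn, le_rfl⟩
  | succ n ih =>
    obtain ⟨U, B, hU, hB, rfl⟩ := succ_mem_lengthSet_iff.1 hn
    obtain ⟨b, hb, hnb⟩ := ih hB
    obtain ⟨u, hu, hu0⟩ : ∃ u ∈ U, u ≠ 0 := by
      by_contra! h
      exact hU.2.1 (Finset.eq_singleton_iff_unique_mem.2 ⟨hU.1, h⟩)
    exact ⟨u + b, Finset.add_mem_add hu hb, by omega⟩

theorem one_mem_lengthSet_iff : 1 ∈ LengthSet A ↔ IsAtomP A :=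
  (succ_mem_lengthSet_iff (n := 0)).trans <| by
    simp only [zero_mem_lengthSet_iff, exists_and_left, exists_eq_left,
      add_singleton_zero_finset, exists_eq_right]

theorem IsAtomP.lengthSet_eq (hU : IsAtomP U) : LengthSet U = {1} := by
  ext n
  rw [Set.mem_singleton_iff]
  refine ⟨fun hn => ?_, fun hn => hn ▸ one_mem_lengthSet_iff.2 hU⟩
  obtain _ | n := n
  · exact absurd (zero_mem_lengthSet_iff.1 hn) hU.2.1
  · obtain ⟨V, B, hV, hB, rfl⟩ := succ_mem_lengthSet_iff.1 hn
    obtain rfl := (hU.2.2 V B hV.1 (zero_mem_of_mem_lengthSet hB) rfl).resolve_left hV.2.1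
    obtain ⟨x, hx, hnx⟩ := exists_le_of_mem_lengthSet hB
    rw [Finset.mem_singleton] at hx
    omega

theorem isAtomP_of_forall_add_notMem (h0 : 0 ∈ U) (hU : U ≠ {0})
    (hadd : ∀ x ∈ U.erase 0, ∀ y ∈ U.erase 0, x + y ∉ U) : IsAtomP U := by
  refine ⟨h0, hU, ?_⟩
  rintro A B hA hB rfl
  by_contra! h
  obtain ⟨a, ha, ha0⟩ := (Finset.nontrivial_iff_ne_singleton hA).2 h.1 |>.exists_ne 0
  obtain ⟨b, hb, hb0⟩ := (Finset.nontrivial_iff_ne_singleton hB).2 h.2 |>.exists_ne 0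
  exact hadd a (Finset.mem_erase.2 ⟨ha0, Finset.subset_add_left A hB ha⟩)
    b (Finset.mem_erase.2 ⟨hb0, Finset.subset_add_right B hA hb⟩) (Finset.add_mem_add ha hb)

theorem lengthSet_range_five : LengthSet (Finset.range 5) = {2, 3, 4} := by
  have a₁ : IsAtomP {0, 1} := isAtomP_of_forall_add_notMem (by decide) (by decide) (by decide)
  have a₂ : IsAtomP {0, 2} := isAtomP_of_forall_add_notMem (by decide) (by decide) (by decide)
  have a₃ : IsAtomP {0, 1, 3} := isAtomP_of_forall_add_notMem (by decide) (by decide) (by decide)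
  ext n
  constructor
  · intro hn
    obtain ⟨x, hx, hnx⟩ := exists_le_of_mem_lengthSet hn
    have h0 : n ≠ 0 := by
      rintro rfl
      exact absurd (zero_mem_lengthSet_iff.1 hn) (by decide)
    have h1 : n ≠ 1 := by
      rintro rfl
      exact absurd ((one_mem_lengthSet_iff.1 hn).2.2 {0, 1} {0, 1, 2, 3}) (by decide)
    rw [Finset.mem_range] at hx
    simp only [Set.mem_insert_iff, Set.mem_singleton_iff]
    omega
  · rintro (rfl | rfl | rfl)
    · exact ⟨{{0, 1}, {0, 1, 3}}, rfl, by simp [a₁, a₃], by decide⟩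
    · exact ⟨{{0, 1}, {0, 1}, {0, 2}}, rfl, by simp [a₁, a₂], by decide⟩
    · exact ⟨{{0, 1}, {0, 1}, {0, 1}, {0, 1}}, rfl, by simp [a₁], by decide⟩

end LengthSet

section RelCancel

variable {B C D U X Y : Finset ℕ}

theorem RelCancel.add_left_cancel (h : RelCancel (B + C)) (h0 : 0 ∈ B + C) (e : B + C = B + D) :
    C = D :=
  have hBC := zero_mem_add_iff.1 h0
  h B C D hBC.1 hBC.2 (zero_mem_add_iff.1 (e ▸ h0)).2 rfl e

theorem RelCancel.add_right_cancel (h : RelCancel (B + C)) (h0 : 0 ∈ B + C) (e : B + C = D + C) :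
    B = D := by
  rw [add_comm B C] at h h0 e
  exact h.add_left_cancel h0 (e.trans (add_comm D C))

theorem RelCancel.left_of_add (h : RelCancel (B + C)) (hC : 0 ∈ C) : RelCancel B := by
  rintro X Y Z hX hY _ rfl e
  refine RelCancel.add_left_cancel (B := X + C) ?_ ?_ ?_
  · rwa [add_right_comm]
  · simp only [zero_mem_add_iff, hX, hY, hC, and_self]
  · rw [add_right_comm, e, add_right_comm]

theorem RelCancel.right_of_add (h : RelCancel (B + C)) (hB : 0 ∈ B) : RelCancel C :=
  RelCancel.left_of_add (add_comm B C ▸ h) hB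

theorem IsAtomP.relCancel (hU : IsAtomP U) : RelCancel U := by
  rintro B C D hB hC hD rfl e
  obtain rfl | rfl := hU.2.2 B C hB hC rfl
  · simpa only [singleton_zero_add_finset] using e
  · rw [add_singleton_zero_finset] at e hU
    obtain h | rfl := hU.2.2 B D hB hD e
    · exact absurd h hU.2.1
    · rfl

theorem RelCancel.exists_unique_add (h : RelCancel (X + Y)) (h0 : 0 ∈ X + Y) {x : ℕ}
    (hx : x ∈ X) : ∃ y ∈ Y, ∀ x' ∈ X, ∀ y' ∈ Y, x' + y' = x + y → x' = x ∧ y' = y := by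
  by_contra! hcon
  -- Otherwise every element of `x + Y` is also a sum without `x`, so `x` can be left out of `X`.
  have herase : X + Y = X.erase x + Y := by
    refine (Finset.add_subset_add_right (Finset.erase_subset x X)).antisymm' fun z hz => ?_
    obtain ⟨a, ha, y, hy, rfl⟩ := Finset.mem_add.1 hz
    by_cases hax : a = x
    · subst hax
      obtain ⟨x', hx', y', hy', e, hne⟩ := hcon y hy
      have hx'a : x' ≠ a := fun hx'a => hne hx'a (by omega)
      exact e ▸ Finset.add_mem_add (Finset.mem_erase.2 ⟨hx'a, hx'⟩) hy'
    · exact Finset.add_mem_add (Finset.mem_erase.2 ⟨hax, ha⟩) hy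
  exact Finset.notMem_erase x X (h.add_right_cancel h0 herase ▸ hx)

end RelCancel

section Product

variable {S T : Finset (ℕ × ℕ)} {P Q : Finset ℕ}

theorem eq_product_of_add_eq_product {X U Y V : Finset ℕ} (hX : RelCancel (X + Y))
    (hU : RelCancel (U + V)) (h0X : 0 ∈ X + Y) (h0U : 0 ∈ U + V) (hS : S ⊆ X ×ˢ U)
    (hT : T ⊆ Y ×ˢ V) (h : S + T = (X + Y) ×ˢ (U + V)) : S = X ×ˢ U := by
  refine hS.antisymm fun ⟨x, u⟩ hxu => ?_
  obtain ⟨hx, hu⟩ := Finset.mem_product.1 hxu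
  obtain ⟨y, hy, hxy⟩ := hX.exists_unique_add h0X hx
  obtain ⟨v, hv, huv⟩ := hU.exists_unique_add h0U hu
  have hmem : (x + y, u + v) ∈ S + T :=
    h ▸ Finset.mem_product.2 ⟨Finset.add_mem_add hx hy, Finset.add_mem_add hu hv⟩
  obtain ⟨⟨x', u'⟩, hs, ⟨y', v'⟩, ht, e⟩ := Finset.mem_add.1 hmem
  obtain ⟨ex, eu⟩ := Prod.mk.inj e
  obtain ⟨hx', hu'⟩ := Finset.mem_product.1 (hS hs)
  obtain ⟨hy', hv'⟩ := Finset.mem_product.1 (hT ht)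
  rwa [(hxy x' hx' y' hy' ex).1, (huv u' hu' v' hv' eu).1] at hs

theorem exists_product_of_add_eq_product (hP : RelCancel P) (hQ : RelCancel Q) (h0P : 0 ∈ P)
    (h0Q : 0 ∈ Q) (h : S + T = P ×ˢ Q) :
    ∃ X U Y V : Finset ℕ, S = X ×ˢ U ∧ T = Y ×ˢ V ∧ X + Y = P ∧ U + V = Q := by
  have hfst : S.image Prod.fst + T.image Prod.fst = P := by
    refine (Finset.image_add (AddMonoidHom.fst ℕ ℕ)).symm.trans ?_
    rw [h]
    exact Finset.product_image_fst ⟨0, h0Q⟩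
  have hsnd : S.image Prod.snd + T.image Prod.snd = Q := by
    refine (Finset.image_add (AddMonoidHom.snd ℕ ℕ)).symm.trans ?_
    rw [h]
    exact Finset.product_image_snd ⟨0, h0P⟩
  refine ⟨_, _, _, _, ?_, ?_, hfst, hsnd⟩ <;> subst hfst hsnd
  · exact eq_product_of_add_eq_product hP hQ h0P h0Q Finset.subset_product Finset.subset_product h
  · rw [add_comm S, add_comm (S.image _), add_comm (S.image _)] at h
    rw [add_comm] at hP hQ h0P h0Q
    exact eq_product_of_add_eq_product hP hQ h0P h0Q Finset.subset_product Finset.subset_product h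

end Product

section Dilate

variable {N : ℕ} {P Q S T U V X Y : Finset ℕ}

/-- Writes a pair of natural numbers as the number with digits `(p.1, p.2)` in base `N`. It is
injective only on the pairs with `p.1 < N`. -/
def encode (N : ℕ) : ℕ × ℕ →+ ℕ :=
  (AddMonoidHom.id ℕ).coprod (AddMonoidHom.mulLeft N)

/-- The dilation `{N * u | u ∈ U}`. It has a name of its own because `N • U` may also be read as the
`N`-fold sumset of `U`. -/
def dilate (N : ℕ) (U : Finset ℕ) : Finset ℕ :=
  U.image (AddMonoidHom.mulLeft N)

theorem encode_apply (p : ℕ × ℕ) : encode N p = p.1 + N * p.2 := rfl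

theorem injOn_encode {s : Set (ℕ × ℕ)} (hs : ∀ p ∈ s, p.1 < N) : Set.InjOn (encode N) s := by
  rintro ⟨a, b⟩ hp ⟨c, d⟩ hq h
  have ha : a < N := hs _ hp
  have hc : c < N := hs _ hq
  have hac : a = c := by
    simpa only [encode_apply, Nat.add_mul_mod_self_left, Nat.mod_eq_of_lt ha,
      Nat.mod_eq_of_lt hc] using congrArg (· % N) h
  subst hac
  rw [encode_apply, encode_apply, Nat.add_left_cancel_iff,
    Nat.mul_left_cancel_iff (Nat.zero_lt_of_lt ha)] at h
  exact Prod.ext rfl h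

theorem exists_image_encode_eq_of_add_eq {F : Finset (ℕ × ℕ)} (hF : 0 ∈ F)
    (hN : ∀ p ∈ F, 2 * p.1 < N) (h : S + T = F.image (encode N)) :
    ∃ S' T' : Finset (ℕ × ℕ), S = S'.image (encode N) ∧ T = T'.image (encode N) ∧ S' + T' = F := by
  have h0 : 0 ∈ S + T := h ▸ Finset.mem_image.2 ⟨0, hF, map_zero _⟩
  obtain ⟨hS, hT⟩ := zero_mem_add_iff.1 h0
  refine exists_image_eq_of_add_eq_image _ hF (injOn_encode fun p hp => ?_) hS hT h
  obtain ⟨q, hq, r, hr, rfl⟩ := Finset.mem_add.1 (Finset.mem_coe.1 hp)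
  have hqN := hN q hq
  have hrN := hN r hr
  rw [Prod.fst_add]
  omega

theorem image_encode_product (P Q : Finset ℕ) :
    (P ×ˢ Q).image (encode N) = P + dilate N Q := by
  ext z
  simp [dilate, encode_apply, Finset.mem_add, and_assoc]

theorem zero_mem_dilate (h0 : 0 ∈ U) : 0 ∈ dilate N U :=
  Finset.mem_image.2 ⟨0, h0, map_zero _⟩

theorem dilate_singleton_zero : dilate N {0} = {0} :=
  Finset.image_singleton _ _

theorem dilate_add (U V : Finset ℕ) : dilate N (U + V) = dilate N U + dilate N V :=
  Finset.image_add (AddMonoidHom.mulLeft N)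

theorem dilate_inj (hN : 0 < N) : dilate N U = dilate N V ↔ U = V :=
  Finset.image_inj (mul_right_injective₀ hN.ne')

theorem dilate_eq_singleton_zero_iff (hN : 0 < N) : dilate N U = {0} ↔ U = {0} := by
  rw [← dilate_inj hN (U := U) (V := {0}), dilate_singleton_zero]

theorem add_dilate_add_add_dilate (X Y U V : Finset ℕ) :
    X + dilate N U + (Y + dilate N V) = X + Y + dilate N (U + V) := by
  rw [dilate_add, add_add_add_comm]

theorem eq_and_eq_of_add_dilate_eq (hX : ∀ x ∈ X, x < N) (hY : ∀ y ∈ Y, y < N) (hX0 : 0 ∈ X)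
    (hU0 : 0 ∈ U) (hY0 : 0 ∈ Y) (hV0 : 0 ∈ V) (h : X + dilate N U = Y + dilate N V) :
    X = Y ∧ U = V := by
  have hinj : Set.InjOn (encode N) ↑(X ×ˢ U ∪ Y ×ˢ V) := injOn_encode fun p hp =>
    (Finset.mem_union.1 (Finset.mem_coe.1 hp)).elim (fun hp => hX _ (Finset.mem_product.1 hp).1)
      fun hp => hY _ (Finset.mem_product.1 hp).1
  rw [← image_encode_product, ← image_encode_product, Finset.image_eq_image_iff_of_injOn hinj
    Finset.subset_union_left Finset.subset_union_right] at h
  constructor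
  · rw [← Finset.product_image_fst (s := X) ⟨0, hU0⟩, h, Finset.product_image_fst ⟨0, hV0⟩]
  · rw [← Finset.product_image_snd (t := U) ⟨0, hX0⟩, h, Finset.product_image_snd ⟨0, hY0⟩]

theorem exists_add_dilate_of_add_eq (hP : RelCancel P) (hQ : RelCancel Q) (h0P : 0 ∈ P)
    (h0Q : 0 ∈ Q) (hN : ∀ p ∈ P, 2 * p < N) (h : S + T = P + dilate N Q) :
    ∃ X U Y V, S = X + dilate N U ∧ T = Y + dilate N V ∧ X + Y = P ∧ U + V = Q := by
  rw [← image_encode_product] at h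
  obtain ⟨S', T', rfl, rfl, h'⟩ := exists_image_encode_eq_of_add_eq
    (Finset.mem_product.2 ⟨h0P, h0Q⟩) (fun p hp => hN _ (Finset.mem_product.1 hp).1) h
  obtain ⟨X, U, Y, V, rfl, rfl, hXY, hUV⟩ := exists_product_of_add_eq_product hP hQ h0P h0Q h'
  exact ⟨X, U, Y, V, image_encode_product X U, image_encode_product Y V, hXY, hUV⟩

theorem RelCancel.add_dilate (hP : RelCancel P) (hQ : RelCancel Q) (h0P : 0 ∈ P) (h0Q : 0 ∈ Q)
    (hN : ∀ p ∈ P, 2 * p < N) : RelCancel (P + dilate N Q) := by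
  intro S T T' _ _ _ h h'
  obtain ⟨X, U, Y, V, rfl, rfl, rfl, rfl⟩ :=
    exists_add_dilate_of_add_eq hP hQ h0P h0Q hN h.symm
  obtain ⟨X', U', Y', V', hS, rfl, hXY, hUV⟩ :=
    exists_add_dilate_of_add_eq hP hQ h0P h0Q hN h'.symm
  have hXY0 := zero_mem_add_iff.1 h0P
  have hUV0 := zero_mem_add_iff.1 h0Q
  have hXY0' := zero_mem_add_iff.1 (hXY ▸ h0P)
  have hUV0' := zero_mem_add_iff.1 (hUV ▸ h0Q)
  have hX : ∀ x ∈ X, x < N := fun x hx => by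
    have := hN x (Finset.subset_add_left X hXY0.2 hx)
    omega
  have hX' : ∀ x ∈ X', x < N := fun x hx => by
    have := hN x (hXY ▸ Finset.subset_add_left X' hXY0'.2 hx)
    omega
  obtain ⟨rfl, rfl⟩ := eq_and_eq_of_add_dilate_eq hX hX' hXY0.1 hUV0.1 hXY0'.1 hUV0'.1 hS
  rw [hP.add_left_cancel h0P hXY.symm, hQ.add_left_cancel h0Q hUV.symm]

theorem isAtomP_dilate_iff (hN : 0 < N) : IsAtomP (dilate N U) ↔ IsAtomP U := by
  have hinj : Function.Injective (AddMonoidHom.mulLeft N) := mul_right_injective₀ hN.ne'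
  constructor
  · rintro ⟨h0, hne, hat⟩
    refine ⟨?_, fun h => hne ((dilate_eq_singleton_zero_iff hN).2 h), ?_⟩
    · obtain ⟨u, hu, hu0⟩ := Finset.mem_image.1 h0
      rwa [hinj (hu0.trans (map_zero (AddMonoidHom.mulLeft N)).symm)] at hu
    · rintro A B hA hB rfl
      simpa only [dilate_eq_singleton_zero_iff hN] using
        hat _ _ (zero_mem_dilate hA) (zero_mem_dilate hB) (dilate_add A B)
  · rintro ⟨h0, hne, hat⟩
    refine ⟨zero_mem_dilate h0, fun h => hne ((dilate_eq_singleton_zero_iff hN).1 h), ?_⟩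
    intro S T hS hT h
    obtain ⟨A, B, rfl, rfl, rfl⟩ :=
      exists_image_eq_of_add_eq_image _ h0 hinj.injOn hS hT h.symm
    have h0AB := zero_mem_add_iff.1 h0
    exact (hat A B h0AB.1 h0AB.2 rfl).imp (dilate_eq_singleton_zero_iff hN).2
      (dilate_eq_singleton_zero_iff hN).2

theorem mem_lengthSet_dilate {n : ℕ} (hN : 0 < N) (hn : n ∈ LengthSet U) :
    n ∈ LengthSet (dilate N U) := by
  induction n generalizing U with
  | zero =>
    rw [zero_mem_lengthSet_iff] at hn ⊢
    rw [hn, dilate_singleton_zero]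
  | succ n ih =>
    obtain ⟨V, B, hV, hB, rfl⟩ := succ_mem_lengthSet_iff.1 hn
    exact succ_mem_lengthSet_iff.2
      ⟨dilate N V, dilate N B, (isAtomP_dilate_iff hN).2 hV, ih hB, (dilate_add V B).symm⟩

theorem IsAtomP.of_add_dilate (hN : 0 < N) (h : IsAtomP (X + dilate N U)) :
    IsAtomP X ∧ U = {0} ∨ X = {0} ∧ IsAtomP U := by
  have h0 := zero_mem_add_iff.1 h.1
  obtain rfl | hU := h.2.2 _ _ h0.1 h0.2 rfl
  · rw [singleton_zero_add_finset, isAtomP_dilate_iff hN] at h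
    exact .inr ⟨rfl, h⟩
  · rw [hU, add_singleton_zero_finset] at h
    exact .inl ⟨h, (dilate_eq_singleton_zero_iff hN).1 hU⟩

theorem mem_add_of_mem_lengthSet_add_dilate {n : ℕ} (hP : RelCancel P) (hQ : RelCancel Q)
    (h0P : 0 ∈ P) (h0Q : 0 ∈ Q) (hN : ∀ p ∈ P, 2 * p < N) (hn : n ∈ LengthSet (P + dilate N Q)) :
    n ∈ LengthSet P + LengthSet Q := by
  have hN0 : 0 < N := hN 0 h0P
  induction n generalizing P Q with
  | zero =>
    rw [zero_mem_lengthSet_iff] at hn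
    have hQ0 : Q = {0} :=
      (dilate_eq_singleton_zero_iff hN0).1 (eq_singleton_zero_of_add_eq (add_comm P _ ▸ hn))
    exact ⟨0, zero_mem_lengthSet_iff.2 (eq_singleton_zero_of_add_eq hn),
      0, zero_mem_lengthSet_iff.2 hQ0, rfl⟩
  | succ n ih =>
    obtain ⟨S, T, hS, hT, h⟩ := succ_mem_lengthSet_iff.1 hn
    obtain ⟨X, U, Y, V, rfl, rfl, rfl, rfl⟩ := exists_add_dilate_of_add_eq hP hQ h0P h0Q hN h
    obtain ⟨hX, hY⟩ := zero_mem_add_iff.1 h0P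
    obtain ⟨hU, hV⟩ := zero_mem_add_iff.1 h0Q
    obtain ⟨a, ha, b, hb, hab⟩ := ih (hP.right_of_add hX) (hQ.right_of_add hU) hY hV
      (fun y hy => hN y (Finset.subset_add_right Y hX hy)) hT
    dsimp only at hab
    obtain ⟨hXat, rfl⟩ | ⟨rfl, hUat⟩ := hS.of_add_dilate hN0
    · refine ⟨a + 1, succ_mem_lengthSet_iff.2 ⟨X, Y, hXat, ha, rfl⟩, b, ?_, by dsimp only; omega⟩
      rwa [singleton_zero_add_finset]
    · refine ⟨a, ?_, b + 1, succ_mem_lengthSet_iff.2 ⟨U, V, hUat, hb, rfl⟩, by dsimp only; omega⟩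
      rwa [singleton_zero_add_finset]

theorem lengthSet_add_dilate (hP : RelCancel P) (hQ : RelCancel Q) (h0P : 0 ∈ P) (h0Q : 0 ∈ Q)
    (hN : ∀ p ∈ P, 2 * p < N) : LengthSet (P + dilate N Q) = LengthSet P + LengthSet Q := by
  refine Set.Subset.antisymm
    (fun n hn => mem_add_of_mem_lengthSet_add_dilate hP hQ h0P h0Q hN hn) ?_
  rintro _ ⟨a, ha, b, hb, rfl⟩
  exact add_mem_lengthSet_add ha (mem_lengthSet_dilate (hN 0 h0P) hb)

end Dilate

section RelPrime

variable {N : ℕ} {B C D T X Y U V : Finset ℕ}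

theorem RelPrime.eq_singleton_zero (h : RelPrime (T + X) (T + Y)) (hX : 0 ∈ T + X)
    (hY : 0 ∈ T + Y) : T = {0} :=
  have hX0 := zero_mem_add_iff.1 hX
  h T hX0.1 ⟨X, hX0.2, rfl⟩ ⟨Y, (zero_mem_add_iff.1 hY).2, rfl⟩

theorem relPrime_singleton_zero : RelPrime {0} D :=
  fun _ _ ⟨_, _, h⟩ _ => eq_singleton_zero_of_add_eq h.symm

theorem relPrime_self_iff (h0 : 0 ∈ B) : RelPrime B B ↔ B = {0} := by
  refine ⟨fun h => ?_, fun h => h ▸ relPrime_singleton_zero⟩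
  have hB := add_singleton_zero_finset B
  exact h B h0 ⟨{0}, Finset.mem_singleton_self 0, hB.symm⟩
    ⟨{0}, Finset.mem_singleton_self 0, hB.symm⟩

theorem IsAtomP.relPrime (hC : IsAtomP C) (h : ¬ C ⊆ D) : RelPrime C D := by
  rintro T hT ⟨C', hC', rfl⟩ ⟨D', hD', rfl⟩
  refine (hC.2.2 T C' hT hC' rfl).resolve_right ?_
  rintro rfl
  exact h (Finset.add_subset_add_left (Finset.singleton_subset_iff.2 hD'))

theorem relPrime_add_dilate_iff (hX : RelCancel X) (hU : RelCancel U) (hY : RelCancel Y)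
    (hV : RelCancel V) (h0X : 0 ∈ X) (h0U : 0 ∈ U) (h0Y : 0 ∈ Y) (h0V : 0 ∈ V)
    (hNX : ∀ x ∈ X, 2 * x < N) (hNY : ∀ y ∈ Y, 2 * y < N) :
    RelPrime (X + dilate N U) (Y + dilate N V) ↔ RelPrime X Y ∧ RelPrime U V := by
  constructor
  · refine fun h => ⟨?_, ?_⟩
    · rintro T hT ⟨C, hC, rfl⟩ ⟨D, hD, rfl⟩
      rw [add_assoc, add_assoc] at h
      exact h.eq_singleton_zero
        (by simp only [zero_mem_add_iff, hT, hC, zero_mem_dilate h0U, and_self])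
        (by simp only [zero_mem_add_iff, hT, hD, zero_mem_dilate h0V, and_self])
    · rintro T hT ⟨C, hC, rfl⟩ ⟨D, hD, rfl⟩
      rw [dilate_add, dilate_add, add_left_comm X, add_left_comm Y] at h
      have hT' := h.eq_singleton_zero
        (by simp only [zero_mem_add_iff, h0X, zero_mem_dilate hT, zero_mem_dilate hC, and_self])
        (by simp only [zero_mem_add_iff, h0Y, zero_mem_dilate hT, zero_mem_dilate hD, and_self])
      exact (dilate_eq_singleton_zero_iff (hNX 0 h0X)).1 hT'
  · rintro ⟨hXY, hUV⟩ T - ⟨S, -, h⟩ ⟨S', -, h'⟩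
    obtain ⟨T₁, T₂, C, C', rfl, rfl, rfl, rfl⟩ :=
      exists_add_dilate_of_add_eq hX hU h0X h0U hNX h.symm
    obtain ⟨T₁', T₂', D, D', hT, rfl, rfl, rfl⟩ :=
      exists_add_dilate_of_add_eq hY hV h0Y h0V hNY h'.symm
    have h₁ := zero_mem_add_iff.1 h0X
    have h₂ := zero_mem_add_iff.1 h0U
    have h₁' := zero_mem_add_iff.1 h0Y
    have h₂' := zero_mem_add_iff.1 h0V
    obtain ⟨rfl, rfl⟩ : T₁ = T₁' ∧ T₂ = T₂' := by
      refine eq_and_eq_of_add_dilate_eq (fun t ht => ?_) (fun t ht => ?_) h₁.1 h₂.1 h₁'.1 h₂'.1 hT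
      · have := hNX t (Finset.subset_add_left T₁ h₁.2 ht)
        omega
      · have := hNY t (Finset.subset_add_left T₁' h₁'.2 ht)
        omega
    rw [hXY.eq_singleton_zero h0X h0Y, hUV.eq_singleton_zero h0U h0V, dilate_singleton_zero,
      add_singleton_zero_finset]

end RelPrime

section CommonLengthSet

variable {N : ℕ} {A₀ A₁ B B₀ B₁ C D E₀ E₁ P P' Q Q' : Finset ℕ}

/-- The lengths of the common divisors of `A₀` and `A₁` whose cofactors can be chosen relatively
prime. -/
def commonLengthSet (A₀ A₁ : Finset ℕ) : Set ℕ :=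
  {n | ∃ B₀ B₁ C, A₀ = B₀ + C ∧ A₁ = B₁ + C ∧ RelPrime B₀ B₁ ∧ n ∈ LengthSet C}

theorem RelCancel.commonLengthSet_self (hB : RelCancel B) (h0 : 0 ∈ B) :
    commonLengthSet B B = LengthSet B := by
  ext n
  constructor
  · rintro ⟨B₀, B₁, C, rfl, h, hprime, hn⟩
    obtain rfl := hB.add_right_cancel h0 h
    rwa [(relPrime_self_iff (zero_mem_add_iff.1 h0).1).1 hprime, singleton_zero_add_finset]
  · intro hn
    have hB' := (singleton_zero_add_finset B).symm
    exact ⟨{0}, {0}, B, hB', hB', relPrime_singleton_zero, hn⟩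

theorem commonLengthSet_add_dilate_subset (hP : RelCancel P) (hP' : RelCancel P')
    (hQ : RelCancel Q) (hQ' : RelCancel Q') (h0P : 0 ∈ P) (h0P' : 0 ∈ P') (h0Q : 0 ∈ Q)
    (h0Q' : 0 ∈ Q') (hNP : ∀ p ∈ P, 2 * p < N) (hNQ : ∀ q ∈ Q, 2 * q < N) :
    commonLengthSet (P + dilate N P') (Q + dilate N Q') ⊆
      commonLengthSet P Q + commonLengthSet P' Q' := by
  rintro n ⟨S, S', T, h, h', hprime, hn⟩
  obtain ⟨X, X', Y, Y', rfl, rfl, rfl, rfl⟩ :=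
    exists_add_dilate_of_add_eq hP hP' h0P h0P' hNP h.symm
  obtain ⟨Z, Z', W, W', rfl, hT, rfl, rfl⟩ :=
    exists_add_dilate_of_add_eq hQ hQ' h0Q h0Q' hNQ h'.symm
  obtain ⟨hX, hY⟩ := zero_mem_add_iff.1 h0P
  obtain ⟨hX', hY'⟩ := zero_mem_add_iff.1 h0P'
  obtain ⟨hZ, hW⟩ := zero_mem_add_iff.1 h0Q
  obtain ⟨hZ', hW'⟩ := zero_mem_add_iff.1 h0Q'
  have hNX : ∀ x ∈ X, 2 * x < N := fun x hx => hNP x (Finset.subset_add_left X hY hx)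
  have hNY : ∀ y ∈ Y, 2 * y < N := fun y hy => hNP y (Finset.subset_add_right Y hX hy)
  have hNZ : ∀ z ∈ Z, 2 * z < N := fun z hz => hNQ z (Finset.subset_add_left Z hW hz)
  have hNW : ∀ w ∈ W, 2 * w < N := fun w hw => hNQ w (Finset.subset_add_right W hZ hw)
  obtain ⟨rfl, rfl⟩ : Y = W ∧ Y' = W' :=
    eq_and_eq_of_add_dilate_eq (fun y hy => by have := hNY y hy; omega)
      (fun w hw => by have := hNW w hw; omega) hY hY' hW hW' hT
  rw [relPrime_add_dilate_iff (hP.left_of_add hY) (hP'.left_of_add hY') (hQ.left_of_add hW)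
    (hQ'.left_of_add hW') hX hX' hZ hZ' hNX hNZ] at hprime
  rw [lengthSet_add_dilate (hP.right_of_add hX) (hP'.right_of_add hX') hY hY' hNY] at hn
  obtain ⟨a, ha, b, hb, rfl⟩ := hn
  exact ⟨a, ⟨X, Z, Y, rfl, rfl, hprime.1, ha⟩, b, ⟨X', Z', Y', rfl, rfl, hprime.2, hb⟩, rfl⟩

theorem commonLengthSet_add_dilate (hP : RelCancel P) (hP' : RelCancel P') (hQ : RelCancel Q)
    (hQ' : RelCancel Q') (h0P : 0 ∈ P) (h0P' : 0 ∈ P') (h0Q : 0 ∈ Q) (h0Q' : 0 ∈ Q')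
    (hNP : ∀ p ∈ P, 2 * p < N) (hNQ : ∀ q ∈ Q, 2 * q < N) :
    commonLengthSet (P + dilate N P') (Q + dilate N Q') =
      commonLengthSet P Q + commonLengthSet P' Q' := by
  refine (commonLengthSet_add_dilate_subset hP hP' hQ hQ' h0P h0P' h0Q h0Q' hNP hNQ).antisymm ?_
  rintro _ ⟨a, ⟨X, Z, Y, rfl, rfl, hprime, ha⟩, b, ⟨X', Z', Y', rfl, rfl, hprime', hb⟩, rfl⟩
  obtain ⟨hX, hY⟩ := zero_mem_add_iff.1 h0P
  obtain ⟨hX', hY'⟩ := zero_mem_add_iff.1 h0P'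
  have hZ := (zero_mem_add_iff.1 h0Q).1
  have hZ' := (zero_mem_add_iff.1 h0Q').1
  refine ⟨X + dilate N X', Z + dilate N Z', Y + dilate N Y',
    (add_dilate_add_add_dilate X Y X' Y').symm, (add_dilate_add_add_dilate Z Y Z' Y').symm,
    ?_, add_mem_lengthSet_add ha (mem_lengthSet_dilate (hNP 0 h0P) hb)⟩
  exact (relPrime_add_dilate_iff (hP.left_of_add hY) (hP'.left_of_add hY') (hQ.left_of_add hY)
    (hQ'.left_of_add hY') hX hX' hZ hZ'
    (fun x hx => hNP x (Finset.subset_add_left X hY hx))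
    (fun z hz => hNQ z (Finset.subset_add_left Z hY hz))).2 ⟨hprime, hprime'⟩

theorem RelPrime.eq_singleton_zero_of_add_eq (hprime : RelPrime B₀ B₁)
    (h₀ : RelCancel (B₀ + C)) (h₁ : RelCancel (B₁ + C)) (h0₀ : 0 ∈ B₀ + C) (h0₁ : 0 ∈ B₁ + C)
    (e₀ : B₀ + C = D + E₀ + C) (e₁ : B₁ + C = D + E₁ + C) : D = {0} := by
  obtain rfl := h₀.add_right_cancel h0₀ e₀
  obtain rfl := h₁.add_right_cancel h0₁ e₁
  exact hprime.eq_singleton_zero (zero_mem_add_iff.1 h0₀).1 (zero_mem_add_iff.1 h0₁).1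

end CommonLengthSet

section Layered

variable {N : ℕ} {A A₀ A₁ B₀ B₁ C S T : Finset ℕ}

/-- The set with `A₀` below and the translate of `A₁` by `N` above; `N` is meant to be so large
that the two layers stay separate in every decomposition. -/
def layered (N : ℕ) (A₀ A₁ : Finset ℕ) : Finset ℕ :=
  A₀ ∪ ({N} + A₁)

/-- The first coordinates of the points of `S` at height `i`. -/
def slice (S : Finset (ℕ × ℕ)) (i : ℕ) : Finset ℕ :=
  (S.filter (·.2 = i)).image Prod.fst

theorem mem_slice {S : Finset (ℕ × ℕ)} {i x : ℕ} : x ∈ slice S i ↔ (x, i) ∈ S := by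
  simp [slice]

theorem slice_add {S T : Finset (ℕ × ℕ)} (hT : ∀ t ∈ T, t.2 = 0) (i : ℕ) :
    slice (S + T) i = slice S i + slice T 0 := by
  ext x
  simp only [Finset.mem_add, mem_slice]
  constructor
  · rintro ⟨⟨b, j⟩, hb, ⟨c, j'⟩, hc, e⟩
    obtain rfl : j' = 0 := hT _ hc
    obtain ⟨rfl, rfl⟩ := Prod.mk.inj e
    exact ⟨b, hb, c, hc, rfl⟩
  · rintro ⟨b, hb, c, hc, rfl⟩
    exact ⟨(b, i), hb, (c, 0), hc, rfl⟩

theorem layered_add (B₀ B₁ C : Finset ℕ) :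
    layered N B₀ B₁ + C = layered N (B₀ + C) (B₁ + C) := by
  rw [layered, Finset.union_add, add_assoc, layered]

theorem image_encode_layers (A₀ A₁ : Finset ℕ) :
    (A₀ ×ˢ {0} ∪ A₁ ×ˢ {1}).image (encode N) = layered N A₀ A₁ := by
  have hdilate : dilate N {1} = {N} := by simp [dilate]
  rw [Finset.image_union, image_encode_product, image_encode_product, dilate_singleton_zero,
    add_singleton_zero_finset, hdilate, add_comm A₁, layered]

theorem zero_mem_layered (h0 : 0 ∈ A₀) : 0 ∈ layered N A₀ A₁ :=
  Finset.mem_union_left _ h0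

theorem mem_layered_self (h0 : 0 ∈ A₁) : N ∈ layered N A₀ A₁ :=
  Finset.mem_union_right _ (Finset.mem_add.2 ⟨N, Finset.mem_singleton_self N, 0, h0, rfl⟩)

theorem layered_ne_singleton_zero (hN : 0 < N) (h0 : 0 ∈ A₁) : layered N A₀ A₁ ≠ {0} :=
  fun h => hN.ne' (Finset.mem_singleton.1 (h ▸ mem_layered_self h0))

theorem eq_and_eq_of_layers_eq
    (h : A₀ ×ˢ ({0} : Finset ℕ) ∪ A₁ ×ˢ {1} = B₀ ×ˢ {0} ∪ B₁ ×ˢ {1}) : A₀ = B₀ ∧ A₁ = B₁ := by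
  constructor <;> ext x
  · simpa using Finset.ext_iff.1 h (x, 0)
  · simpa using Finset.ext_iff.1 h (x, 1)

theorem eq_and_eq_of_layered_eq (hA₀ : ∀ x ∈ A₀, x < N) (hA₁ : ∀ x ∈ A₁, x < N)
    (hB₀ : ∀ x ∈ B₀, x < N) (hB₁ : ∀ x ∈ B₁, x < N) (h : layered N A₀ A₁ = layered N B₀ B₁) :
    A₀ = B₀ ∧ A₁ = B₁ := by
  rw [← image_encode_layers, ← image_encode_layers] at h
  refine eq_and_eq_of_layers_eq ((Finset.image_eq_image_iff_of_injOn (injOn_encode fun p hp => ?_)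
    Finset.subset_union_left Finset.subset_union_right).1 h)
  simp only [Finset.coe_union, Set.mem_union, Finset.mem_coe, Finset.mem_product] at hp
  obtain (⟨hp, -⟩ | ⟨hp, -⟩) | ⟨hp, -⟩ | ⟨hp, -⟩ := hp
  exacts [hA₀ _ hp, hA₁ _ hp, hB₀ _ hp, hB₁ _ hp]

theorem exists_layers_of_add_eq_layers {S T : Finset (ℕ × ℕ)} (hT0 : 0 ∈ T)
    (hT : ∀ t ∈ T, t.2 = 0) (h : S + T = A₀ ×ˢ {0} ∪ A₁ ×ˢ {1}) :
    ∃ B₀ B₁ C, B₀ + C = A₀ ∧ B₁ + C = A₁ ∧ S = B₀ ×ˢ {0} ∪ B₁ ×ˢ {1} ∧ T = C ×ˢ {0} := by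
  have hS : ∀ s ∈ S, s.2 = 0 ∨ s.2 = 1 := fun s hs => by
    have hs' := h ▸ Finset.subset_add_left S hT0 hs
    simp only [Finset.mem_union, Finset.mem_product, Finset.mem_singleton] at hs'
    exact hs'.imp And.right And.right
  refine ⟨slice S 0, slice S 1, slice T 0, ?_, ?_, ?_, ?_⟩
  · ext x
    simp [← slice_add hT, mem_slice, h]
  · ext x
    simp [← slice_add hT, mem_slice, h]
  · ext ⟨x, i⟩
    simp only [Finset.mem_union, Finset.mem_product, Finset.mem_singleton, mem_slice]
    refine ⟨fun hx => (hS _ hx).imp ?_ ?_, ?_⟩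
    · rintro rfl
      exact ⟨hx, rfl⟩
    · rintro rfl
      exact ⟨hx, rfl⟩
    · rintro (⟨hx, rfl⟩ | ⟨hx, rfl⟩) <;> exact hx
  · ext ⟨x, i⟩
    simp only [Finset.mem_product, Finset.mem_singleton, mem_slice]
    refine ⟨fun hx => ?_, fun ⟨hx, hi⟩ => hi ▸ hx⟩
    obtain rfl : i = 0 := hT _ hx
    exact ⟨hx, rfl⟩

theorem forall_snd_eq_zero_or_of_add_eq_layers {S T : Finset (ℕ × ℕ)}
    (h : S + T = A₀ ×ˢ {0} ∪ A₁ ×ˢ {1}) : (∀ t ∈ T, t.2 = 0) ∨ ∀ s ∈ S, s.2 = 0 := by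
  by_contra! hcon
  obtain ⟨⟨t, ht, ht0⟩, s, hs, hs0⟩ := hcon
  have hst := h ▸ Finset.add_mem_add hs ht
  simp only [Finset.mem_union, Finset.mem_product, Finset.mem_singleton, Prod.snd_add] at hst
  omega

theorem exists_layered_of_add_eq (h0₀ : 0 ∈ A₀) (hN₀ : ∀ x ∈ A₀, 2 * x < N)
    (hN₁ : ∀ x ∈ A₁, 2 * x < N) (h : S + T = layered N A₀ A₁) :
    ∃ B₀ B₁ C, B₀ + C = A₀ ∧ B₁ + C = A₁ ∧
      (S = layered N B₀ B₁ ∧ T = C ∨ S = C ∧ T = layered N B₀ B₁) := by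
  have image_layer : ∀ C : Finset ℕ, (C ×ˢ {0}).image (encode N) = C := fun C => by
    rw [image_encode_product, dilate_singleton_zero, add_singleton_zero_finset]
  have h0 : (0 : ℕ × ℕ) ∈ A₀ ×ˢ ({0} : Finset ℕ) ∪ A₁ ×ˢ {1} :=
    Finset.mem_union_left _ (Finset.mem_product.2 ⟨h0₀, Finset.mem_singleton_self 0⟩)
  rw [← image_encode_layers] at h
  obtain ⟨S', T', rfl, rfl, h'⟩ := exists_image_encode_eq_of_add_eq h0
    (fun p hp => (Finset.mem_union.1 hp).elim (fun hp => hN₀ _ (Finset.mem_product.1 hp).1)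
      fun hp => hN₁ _ (Finset.mem_product.1 hp).1) h
  obtain ⟨hS0, hT0⟩ := zero_mem_add_iff.1 (h' ▸ h0)
  obtain hT | hS := forall_snd_eq_zero_or_of_add_eq_layers h'
  · obtain ⟨B₀, B₁, C, h₀, h₁, rfl, rfl⟩ := exists_layers_of_add_eq_layers hT0 hT h'
    exact ⟨B₀, B₁, C, h₀, h₁, .inl ⟨image_encode_layers B₀ B₁, image_layer C⟩⟩
  · rw [add_comm] at h'
    obtain ⟨B₀, B₁, C, h₀, h₁, rfl, rfl⟩ := exists_layers_of_add_eq_layers hS0 hS h'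
    exact ⟨B₀, B₁, C, h₀, h₁, .inr ⟨image_layer C, image_encode_layers B₀ B₁⟩⟩

theorem RelCancel.layered (h₀ : RelCancel A₀) (h₁ : RelCancel A₁) (h0₀ : 0 ∈ A₀) (h0₁ : 0 ∈ A₁)
    (hN₀ : ∀ x ∈ A₀, 2 * x < N) (hN₁ : ∀ x ∈ A₁, 2 * x < N) : RelCancel (layered N A₀ A₁) := by
  have not_mem_of_add_eq : ∀ {B C}, B + C = A₀ → N ∉ C := fun {B C} hBC hN => by
    have := hN₀ N (hBC ▸ Finset.subset_add_right C (zero_mem_add_iff.1 (hBC ▸ h0₀)).1 hN)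
    omega
  intro S T T' _ _ _ h h'
  obtain ⟨B₀, B₁, C, rfl, rfl, hST⟩ := exists_layered_of_add_eq h0₀ hN₀ hN₁ h.symm
  obtain ⟨B₀', B₁', C', e₀, e₁, hST'⟩ := exists_layered_of_add_eq h0₀ hN₀ hN₁ h'.symm
  have h0B₁ := (zero_mem_add_iff.1 h0₁).1
  have h0B₁' := (zero_mem_add_iff.1 (e₁ ▸ h0₁)).1
  obtain ⟨rfl, rfl⟩ | ⟨rfl, rfl⟩ := hST <;> obtain ⟨hS, rfl⟩ | ⟨hS, rfl⟩ := hST'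
  · have hlt : ∀ {X Y A : Finset ℕ}, X + Y = A → 0 ∈ A → (∀ x ∈ A, 2 * x < N) → ∀ x ∈ X, x < N :=
      fun {X Y A} e h0 hN x hx => by
        have := hN x (e ▸ Finset.subset_add_left X (zero_mem_add_iff.1 (e ▸ h0)).2 hx)
        omega
    obtain ⟨rfl, rfl⟩ := eq_and_eq_of_layered_eq (hlt rfl h0₀ hN₀) (hlt rfl h0₁ hN₁)
      (hlt e₀ h0₀ hN₀) (hlt e₁ h0₁ hN₁) hS
    exact h₀.add_left_cancel h0₀ e₀.symm
  · exact absurd (hS ▸ mem_layered_self h0B₁) (not_mem_of_add_eq e₀)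
  · exact absurd (hS ▸ mem_layered_self h0B₁') (not_mem_of_add_eq rfl)
  · subst hS
    rw [h₀.add_right_cancel h0₀ e₀.symm, h₁.add_right_cancel h0₁ e₁.symm]

theorem isAtomP_layered_iff (h0₀ : 0 ∈ A₀) (h0₁ : 0 ∈ A₁) (hN₀ : ∀ x ∈ A₀, 2 * x < N)
    (hN₁ : ∀ x ∈ A₁, 2 * x < N) : IsAtomP (layered N A₀ A₁) ↔ RelPrime A₀ A₁ := by
  have hN : 0 < N := hN₀ 0 h0₀
  constructor
  · rintro ⟨-, -, hat⟩ T hT ⟨C, hC, rfl⟩ ⟨D, hD, rfl⟩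
    rw [add_comm T, add_comm T, ← layered_add] at hat
    exact (hat _ _ (zero_mem_layered hC) hT rfl).resolve_left (layered_ne_singleton_zero hN hD)
  · refine fun hprime => ⟨zero_mem_layered h0₀, layered_ne_singleton_zero hN h0₁, ?_⟩
    intro S T _ _ h
    obtain ⟨B₀, B₁, C, rfl, rfl, hST⟩ := exists_layered_of_add_eq h0₀ hN₀ hN₁ h.symm
    rw [add_comm B₀] at hprime h0₀
    rw [add_comm B₁] at hprime h0₁
    have hC := hprime.eq_singleton_zero h0₀ h0₁
    exact hST.symm.imp (fun h => h.1.trans hC) fun h => h.2.trans hC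

theorem exists_mem_commonLengthSet_of_mem_lengthSet_layered {n : ℕ} (h0₀ : 0 ∈ A₀) (h0₁ : 0 ∈ A₁)
    (hN₀ : ∀ x ∈ A₀, 2 * x < N) (hN₁ : ∀ x ∈ A₁, 2 * x < N)
    (hn : n ∈ LengthSet (layered N A₀ A₁)) : ∃ m ∈ commonLengthSet A₀ A₁, m + 1 = n := by
  induction n generalizing A₀ A₁ with
  | zero =>
    exact absurd (zero_mem_lengthSet_iff.1 hn) (layered_ne_singleton_zero (hN₀ 0 h0₀) h0₁)
  | succ n ih =>
    obtain ⟨U, R, hU, hR, h⟩ := succ_mem_lengthSet_iff.1 hn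
    obtain ⟨B₀, B₁, C, rfl, rfl, hUR⟩ := exists_layered_of_add_eq h0₀ hN₀ hN₁ h
    obtain ⟨hB₀, hC⟩ := zero_mem_add_iff.1 h0₀
    have hB₁ := (zero_mem_add_iff.1 h0₁).1
    have hNB₀ : ∀ x ∈ B₀, 2 * x < N := fun x hx => hN₀ x (Finset.subset_add_left B₀ hC hx)
    have hNB₁ : ∀ x ∈ B₁, 2 * x < N := fun x hx => hN₁ x (Finset.subset_add_left B₁ hC hx)
    obtain ⟨rfl, rfl⟩ | ⟨rfl, rfl⟩ := hUR
    · exact ⟨n, ⟨B₀, B₁, R, rfl, rfl, (isAtomP_layered_iff hB₀ hB₁ hNB₀ hNB₁).1 hU, hR⟩, rfl⟩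
    · obtain ⟨m, ⟨E₀, E₁, D, rfl, rfl, hprime, hm⟩, rfl⟩ := ih hB₀ hB₁ hNB₀ hNB₁ hR
      exact ⟨m + 1, ⟨E₀, E₁, D + U, add_assoc E₀ D U, add_assoc E₁ D U, hprime,
        add_mem_lengthSet_add hm (one_mem_lengthSet_iff.2 hU)⟩, rfl⟩

theorem lengthSet_layered (h0₀ : 0 ∈ A₀) (h0₁ : 0 ∈ A₁) (hN₀ : ∀ x ∈ A₀, 2 * x < N)
    (hN₁ : ∀ x ∈ A₁, 2 * x < N) :
    LengthSet (layered N A₀ A₁) = (· + 1) '' commonLengthSet A₀ A₁ := by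
  refine Set.Subset.antisymm
    (fun n hn => exists_mem_commonLengthSet_of_mem_lengthSet_layered h0₀ h0₁ hN₀ hN₁ hn) ?_
  rintro _ ⟨m, ⟨B₀, B₁, C, rfl, rfl, hprime, hm⟩, rfl⟩
  obtain ⟨hB₀, hC⟩ := zero_mem_add_iff.1 h0₀
  have hB₁ := (zero_mem_add_iff.1 h0₁).1
  have hat : IsAtomP (layered N B₀ B₁) := (isAtomP_layered_iff hB₀ hB₁
    (fun x hx => hN₀ x (Finset.subset_add_left B₀ hC hx))
    (fun x hx => hN₁ x (Finset.subset_add_left B₁ hC hx))).2 hprime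
  rw [← layered_add, add_comm _ C]
  exact add_mem_lengthSet_add hm (one_mem_lengthSet_iff.2 hat)

theorem exists_relCancel_lengthSet_eq_image_commonLengthSet (h₀ : RelCancel A₀) (h₁ : RelCancel A₁)
    (h0₀ : 0 ∈ A₀) (h0₁ : 0 ∈ A₁) :
    ∃ A, 0 ∈ A ∧ RelCancel A ∧ LengthSet A = (· + 1) '' commonLengthSet A₀ A₁ := by
  obtain ⟨N, hN⟩ := exists_forall_two_mul_lt (A₀ ∪ A₁)
  obtain ⟨hN₀, hN₁⟩ := Finset.forall_mem_union.1 hN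
  exact ⟨layered N A₀ A₁, zero_mem_layered h0₀, h₀.layered h₁ h0₀ h0₁ hN₀ hN₁,
    lengthSet_layered h0₀ h0₁ hN₀ hN₁⟩

theorem exists_relCancel_lengthSet_eq_image_lengthSet (hA : RelCancel A) (h0 : 0 ∈ A) :
    ∃ B, 0 ∈ B ∧ RelCancel B ∧ LengthSet B = (· + 1) '' LengthSet A := by
  simpa only [hA.commonLengthSet_self h0] using
    exists_relCancel_lengthSet_eq_image_commonLengthSet hA hA h0 h0

end Layered

section HexagonPentagon

/-- The elements `x` of `X` with `B + {x} ⊆ X`. If `0 ∈ B`, this is the largest `Y` with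
`B + Y ⊆ X`, so every cofactor of `B` in `X` is contained in it. -/
def cofactor (X B : Finset ℕ) : Finset ℕ :=
  X.filter fun x => ∀ b ∈ B, b + x ∈ X

theorem subset_cofactor {X B Y : Finset ℕ} (h0 : 0 ∈ B) (h : B + Y ⊆ X) : Y ⊆ cofactor X B :=
  fun _ hy => Finset.mem_filter.2 ⟨h (Finset.subset_add_right Y h0 hy),
    fun _ hb => h (Finset.add_mem_add hb hy)⟩

theorem add_cofactor_eq {X B Y : Finset ℕ} (h0 : 0 ∈ B) (h : B + Y = X) :
    B + cofactor X B = X := by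
  refine Finset.Subset.antisymm (fun z hz => ?_)
    (h.symm.subset.trans (Finset.add_subset_add_left (subset_cofactor h0 h.subset)))
  obtain ⟨b, hb, x, hx, rfl⟩ := Finset.mem_add.1 hz
  exact (Finset.mem_filter.1 hx).2 b hb

/-- A cofactor smaller than the largest one would leave some element of the latter superfluous, so
only one candidate per set `B` has to be tested. -/
theorem relCancel_of_forall_add_erase_cofactor_ne {X : Finset ℕ}
    (hX : ∀ B ∈ X.powerset, B + cofactor X B = X →
      ∀ c ∈ cofactor X B, B + (cofactor X B).erase c ≠ X) : RelCancel X := by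
  have eq_cofactor : ∀ {B C : Finset ℕ}, 0 ∈ B → 0 ∈ C → X = B + C → C = cofactor X B := by
    intro B C hB hC h
    refine (subset_cofactor hB h.symm.subset).antisymm fun c hc => ?_
    by_contra hcC
    have hcof := add_cofactor_eq hB h.symm
    refine hX B (Finset.mem_powerset.2 (h ▸ Finset.subset_add_left B hC)) hcof c hc ?_
    refine Finset.Subset.antisymm
      ((Finset.add_subset_add_left (Finset.erase_subset _ _)).trans hcof.subset) ?_
    nth_rw 1 [h]
    exact Finset.add_subset_add_left
      (Finset.subset_erase.2 ⟨subset_cofactor hB h.symm.subset, hcC⟩)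
  intro B C D hB hC hD h h'
  rw [eq_cofactor hB hC h, ← eq_cofactor hB hD h']

/-- The set `{0, 1} + {0, 3} + {0, 4} = {0, 1, 4} + {0, 3, 4}`, the image under `(a, b) ↦ a + 3 * b`
of a lattice hexagon that is both a sum of three segments and a sum of two triangles. -/
def hexagon : Finset ℕ := {0, 1, 3, 4, 5, 7, 8}

/-- The set `{0, 1} + {0, 4} + {0, 1, 4}`, the image under `(a, b) ↦ a + 3 * b` of a lattice
pentagon. It shares with `hexagon` the triangle `{0, 1, 4}` and the parallelogram `{0, 1, 4, 5}`. -/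
def pentagon : Finset ℕ := {0, 1, 2, 4, 5, 6, 8, 9}

theorem relCancel_hexagon : RelCancel hexagon :=
  relCancel_of_forall_add_erase_cofactor_ne (by decide +kernel)

theorem relCancel_pentagon : RelCancel pentagon :=
  relCancel_of_forall_add_erase_cofactor_ne (by decide +kernel)

theorem eq_of_add_eq_hexagon_of_add_eq_pentagon {B₀ B₁ C : Finset ℕ} (h₀ : B₀ + C = hexagon)
    (h₁ : B₁ + C = pentagon) :
    C = {0} ∨ C = {0, 1} ∨ C = {0, 4} ∨ C = {0, 1, 4} ∨ C = {0, 1, 4, 5} := by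
  obtain ⟨hB₀, hC⟩ := zero_mem_add_iff.1 (h₀ ▸ (by decide : 0 ∈ hexagon))
  have hB₁ := (zero_mem_add_iff.1 (h₁ ▸ (by decide : 0 ∈ pentagon))).1
  have hmem : C ∈ (hexagon ∩ pentagon).powerset := Finset.mem_powerset.2 (Finset.subset_inter
    (h₀ ▸ Finset.subset_add_right C hB₀) (h₁ ▸ Finset.subset_add_right C hB₁))
  have hcommon : ∀ D ∈ (hexagon ∩ pentagon).powerset, 0 ∈ D → D + cofactor hexagon D = hexagon →
      D + cofactor pentagon D = pentagon →
      D = {0} ∨ D = {0, 1} ∨ D = {0, 4} ∨ D = {0, 1, 4} ∨ D = {0, 1, 4, 5} := by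
    decide +kernel
  exact hcommon C hmem hC (add_cofactor_eq hC (add_comm C B₀ ▸ h₀))
    (add_cofactor_eq hC (add_comm C B₁ ▸ h₁))

theorem lengthSet_zero_one_four_five : LengthSet {0, 1, 4, 5} = {2} := by
  have hat : IsAtomP {0, 1} := isAtomP_of_forall_add_notMem (by decide) (by decide) (by decide)
  rw [show ({0, 1, 4, 5} : Finset ℕ) = {0, 1} + dilate 4 {0, 1} by decide,
    lengthSet_add_dilate hat.relCancel hat.relCancel hat.1 hat.1 (by decide), hat.lengthSet_eq,
    Set.singleton_add_singleton]

theorem isAtomP_zero_one_four : IsAtomP {0, 1, 4} :=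
  isAtomP_of_forall_add_notMem (by decide) (by decide) (by decide)

theorem eq_of_add_eq_hexagon_of_add_eq_pentagon_of_relPrime {B₀ B₁ C : Finset ℕ}
    (h₀ : B₀ + C = hexagon) (h₁ : B₁ + C = pentagon) (hprime : RelPrime B₀ B₁) :
    C = {0, 1, 4} ∨ C = {0, 1, 4, 5} := by
  have eq_singleton_zero : ∀ D E₀ E₁ : Finset ℕ, hexagon = D + E₀ + C → pentagon = D + E₁ + C →
      D = {0} := fun D E₀ E₁ e₀ e₁ =>
    hprime.eq_singleton_zero_of_add_eq (h₀ ▸ relCancel_hexagon) (h₁ ▸ relCancel_pentagon)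
      (h₀ ▸ by decide) (h₁ ▸ by decide) (h₀.trans e₀) (h₁.trans e₁)
  obtain rfl | rfl | rfl | hC := eq_of_add_eq_hexagon_of_add_eq_pentagon h₀ h₁
  · exact absurd (eq_singleton_zero {0, 1, 4} {0, 3, 4} {0, 1, 4, 5} (by decide) (by decide))
      (by decide)
  · exact absurd (eq_singleton_zero {0, 4} {0, 3} {0, 1, 4} (by decide) (by decide)) (by decide)
  · exact absurd (eq_singleton_zero {0, 1} {0, 3} {0, 1, 4} (by decide) (by decide)) (by decide)
  · exact hC

theorem commonLengthSet_hexagon_pentagon : commonLengthSet hexagon pentagon = {1, 2} := by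
  ext n
  constructor
  · rintro ⟨B₀, B₁, C, h₀, h₁, hprime, hn⟩
    obtain rfl | rfl :=
      eq_of_add_eq_hexagon_of_add_eq_pentagon_of_relPrime h₀.symm h₁.symm hprime
    · rw [isAtomP_zero_one_four.lengthSet_eq] at hn
      exact .inl hn
    · rw [lengthSet_zero_one_four_five] at hn
      exact .inr hn
  · rintro (rfl | rfl)
    · have hat : IsAtomP {0, 3, 4} :=
        isAtomP_of_forall_add_notMem (by decide) (by decide) (by decide)
      exact ⟨{0, 3, 4}, {0, 1, 4, 5}, {0, 1, 4}, by decide, by decide,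
        hat.relPrime (by decide), one_mem_lengthSet_iff.2 isAtomP_zero_one_four⟩
    · have hat : IsAtomP {0, 3} :=
        isAtomP_of_forall_add_notMem (by decide) (by decide) (by decide)
      exact ⟨{0, 3}, {0, 1, 4}, {0, 1, 4, 5}, by decide, by decide,
        hat.relPrime (by decide), by rw [lengthSet_zero_one_four_five, Set.mem_singleton_iff]⟩

theorem exists_relCancel_lengthSet_eq_three_four_five :
    ∃ A, 0 ∈ A ∧ RelCancel A ∧ LengthSet A = {3, 4, 5} := by
  obtain ⟨N, hN⟩ := exists_forall_two_mul_lt (hexagon ∪ pentagon)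
  obtain ⟨hNH, hNP⟩ := Finset.forall_mem_union.1 hN
  have hH0 : 0 ∈ hexagon := by decide
  have hP0 : 0 ∈ pentagon := by decide
  have hcommon : commonLengthSet (hexagon + dilate N hexagon) (pentagon + dilate N pentagon) =
      {2, 3, 4} := by
    rw [commonLengthSet_add_dilate relCancel_hexagon relCancel_hexagon relCancel_pentagon
      relCancel_pentagon hH0 hH0 hP0 hP0 hNH hNP, commonLengthSet_hexagon_pentagon]
    ext n
    simp only [Set.mem_add, Set.mem_insert_iff, Set.mem_singleton_iff, exists_eq_or_imp,
      exists_eq_left]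
    omega
  obtain ⟨A, hA0, hA, hL⟩ := exists_relCancel_lengthSet_eq_image_commonLengthSet
    (relCancel_hexagon.add_dilate relCancel_hexagon hH0 hH0 hNH)
    (relCancel_pentagon.add_dilate relCancel_pentagon hP0 hP0 hNP)
    (zero_mem_add_iff.2 ⟨hH0, zero_mem_dilate hH0⟩) (zero_mem_add_iff.2 ⟨hP0, zero_mem_dilate hP0⟩)
  refine ⟨A, hA0, hA, ?_⟩
  rw [hL, hcommon, Set.image_insert_eq, Set.image_pair]

end HexagonPentagon

theorem exists_relCancel_lengthSet_eq_interval {k : ℕ} (hk : 3 ≤ k) :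
    ∃ A, 0 ∈ A ∧ RelCancel A ∧ LengthSet A = {k, k + 1, k + 2} := by
  induction k, hk using Nat.le_induction with
  | base => exact exists_relCancel_lengthSet_eq_three_four_five
  | succ k _ ih =>
    obtain ⟨A, hA0, hA, hL⟩ := ih
    obtain ⟨B, hB0, hB, hLB⟩ := exists_relCancel_lengthSet_eq_image_lengthSet hA hA0
    refine ⟨B, hB0, hB, ?_⟩
    rw [hLB, hL, Set.image_insert_eq, Set.image_pair]

theorem interval_lengthSet (k : ℕ) (hk : 2 ≤ k) :
    ∃ A : Finset ℕ, 0 ∈ A ∧ LengthSet A = {k, k + 1, k + 2} := by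
  obtain rfl | hk3 := hk.eq_or_lt
  · exact ⟨Finset.range 5, by decide, lengthSet_range_five⟩
  · obtain ⟨A, hA0, -, hL⟩ := exists_relCancel_lengthSet_eq_interval hk3
    exact ⟨A, hA0, hL⟩
end
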